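/- arXiv:2507.03688 — 4 statements merged into one kernel-verified Lean document; each statement's English description precedes it below -/
import Mathlib

section
/- Existence and decay of the similarity profile for the porous medium equation: Let the pressure be the γ-law p(ρ) = k ρ^γ with constants k > 0 and γ ≥ 1, and let α > 0. Then for every pair ρ₊, ρ₋ > 0 there exists a function ρ* ∈ C^∞(ℝ) that satisfies 0 = (1/α)(p(ρ*))″(y) + (y/2)(ρ*)′(y) for all y ∈ ℝ and ρ*(y) → ρ± as y → ±∞. Moreover, ρ* is monotone, and there exist constants C, c > 0 such that |ρ*(y) − ρ̂(y)| + |(ρ*)′(y)| + |(ρ*)″(y)| ≤ C |ρ₊ − ρ₋| e^{−cαy²} for all y ∈ ℝ. In particular, 0 < min{ρ₋,ρ₊} ≤ ρ*(y) ≤ max{ρ₋,ρ₊} for all y ∈ ℝ. -/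
noncomputable section
open MeasureTheory Real Set Filter

/-- The step function `ρ̂`. -/
def rhoHat (ρm ρp : ℝ) (y : ℝ) : ℝ := if y < 0 then ρm else ρp

open scoped Topology ContDiff

/-!
Take the density as the independent variable, rescaled to run from `0` to `1`, and let `q x` be
the flux at density `x`. With `b` the diffusivity, the profile equation says that the position is
`y = -2 q'` and that `-q'' = b / (2 q)`, with `q = 0` at both ends. For a boundary value `ε > 0`
this singular Dirichlet problem is solved by a contraction in `log q`. The solutions decrease with
`ε`, and the slope of their limit as `ε → 0` is unbounded at both ends, because a bounded slope
would give `q ≤ M x` near `0` and hence `-q'' ≥ a₀ / (M x)`, which is not integrable. So `-2 q'`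
is an increasing bijection from `(0, 1)` onto the real line, and its inverse is the profile `X`.

Along the profile the flux satisfies `F' = -(y / 2) F / b`, hence decays like a Gaussian. Since
`b / 2` is bounded below and `q` above, `q` dominates a multiple of `x (1 - x)`; so
`X (1 - X) ≤ C F`, and `X` approaches its limits as fast as the flux decays.
-/

/-! ### The Dirichlet problem on the unit interval -/

/-- The Green kernel of `-d²/dx²` on `[0, 1]` with Dirichlet boundary conditions. -/
def dirichletKernel (x s : ℝ) : ℝ := min x s * (1 - max x s)

/-- The Green potential of `f`, i.e. the solution of `-u'' = f` on `[0, 1]` vanishing at both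
ends. Sources with a singularity of order `1 / (s (1 - s))` at the ends are allowed. -/
def dirichletPotential (f : ℝ → ℝ) (x : ℝ) : ℝ := ∫ s in Ioo 0 1, dirichletKernel x s * f s

/-- The derivative of the Green potential of `f`, as an integral. -/
def dirichletSlope (f : ℝ → ℝ) (x : ℝ) : ℝ :=
  (∫ s in x..1, (1 - s) * f s) - ∫ s in (0 : ℝ)..x, s * f s

section DirichletKernel

variable {x s : ℝ}

lemma continuous_uncurry_dirichletKernel : Continuous (Function.uncurry dirichletKernel) := by
  unfold Function.uncurry dirichletKernel
  fun_prop

lemma continuous_dirichletKernel_right (x : ℝ) : Continuous (dirichletKernel x) :=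
  continuous_uncurry_dirichletKernel.comp (Continuous.prodMk_right x)

lemma dirichletKernel_nonneg (hx : x ∈ Icc (0 : ℝ) 1) (hs : s ∈ Icc (0 : ℝ) 1) :
    0 ≤ dirichletKernel x s :=
  mul_nonneg (le_min hx.1 hs.1) (sub_nonneg.2 (max_le hx.2 hs.2))

lemma dirichletKernel_le (hx : x ≤ 1) (hs : s ∈ Icc (0 : ℝ) 1) :
    dirichletKernel x s ≤ s * (1 - s) :=
  mul_le_mul (min_le_right x s) (sub_le_sub_left (le_max_right x s) 1)
    (sub_nonneg.2 (max_le hx hs.2)) hs.1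

lemma dirichletKernel_one_sub (x s : ℝ) :
    dirichletKernel (1 - x) (1 - s) = dirichletKernel x s := by
  rw [dirichletKernel, dirichletKernel, min_sub_sub_left, max_sub_sub_left]
  ring

lemma dirichletKernel_zero_left (hs : 0 ≤ s) : dirichletKernel 0 s = 0 := by
  rw [dirichletKernel, min_eq_left hs, zero_mul]

end DirichletKernel

section DirichletPotential

variable {f g : ℝ → ℝ} {C x : ℝ}

lemma dirichletPotential_eq_intervalIntegral (f : ℝ → ℝ) (x : ℝ) :
    dirichletPotential f x = ∫ s in (0 : ℝ)..1, dirichletKernel x s * f s := by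
  rw [intervalIntegral.integral_of_le zero_le_one, integral_Ioc_eq_integral_Ioo,
    dirichletPotential]

lemma dirichletPotential_congr (h : EqOn f g (Ioo 0 1)) (x : ℝ) :
    dirichletPotential f x = dirichletPotential g x :=
  setIntegral_congr_fun measurableSet_Ioo fun s hs => by simp only [h hs]

lemma dirichletPotential_const_mul (c : ℝ) (f : ℝ → ℝ) (x : ℝ) :
    dirichletPotential (fun s => c * f s) x = c * dirichletPotential f x := by
  simp only [dirichletPotential, mul_left_comm _ c, integral_const_mul]

lemma dirichletPotential_zero_right (f : ℝ → ℝ) : dirichletPotential f 0 = 0 :=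
  setIntegral_eq_zero_of_forall_eq_zero fun s hs => by
    rw [dirichletKernel_zero_left hs.1.le, zero_mul]

lemma dirichletPotential_one_sub (f : ℝ → ℝ) (x : ℝ) :
    dirichletPotential f (1 - x) = dirichletPotential (fun s => f (1 - s)) x := by
  have h := intervalIntegral.integral_comp_sub_left (a := 0) (b := 1)
    (fun s => dirichletKernel (1 - x) s * f s) 1
  simp only [dirichletKernel_one_sub, sub_self, sub_zero] at h
  rw [dirichletPotential_eq_intervalIntegral, dirichletPotential_eq_intervalIntegral, h]

lemma dirichletPotential_one_right (f : ℝ → ℝ) : dirichletPotential f 1 = 0 := by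
  rw [← sub_zero (1 : ℝ), dirichletPotential_one_sub, dirichletPotential_zero_right]

lemma dirichletSlope_one_sub (f : ℝ → ℝ) (x : ℝ) :
    dirichletSlope f (1 - x) = -dirichletSlope (fun s => f (1 - s)) x := by
  have h₁ := intervalIntegral.integral_comp_sub_left (a := x) (b := 1) (fun s => s * f s) 1
  have h₂ := intervalIntegral.integral_comp_sub_left (a := 0) (b := x)
    (fun s => (1 - s) * f s) 1
  simp only [sub_self, sub_zero, sub_sub_cancel] at h₁ h₂
  simp only [dirichletSlope, h₁, h₂, neg_sub]

lemma abs_dirichletKernel_mul_le (hC : ∀ s ∈ Ioo (0 : ℝ) 1, |s * (1 - s) * f s| ≤ C)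
    (hx : x ∈ Icc (0 : ℝ) 1) {s : ℝ} (hs : s ∈ Ioo (0 : ℝ) 1) :
    |dirichletKernel x s * f s| ≤ C := by
  have hs' := Ioo_subset_Icc_self hs
  have hK := dirichletKernel_nonneg hx hs'
  refine le_trans ?_ (hC s hs)
  rw [abs_mul, abs_mul]
  exact mul_le_mul_of_nonneg_right (abs_le_abs_of_nonneg hK (dirichletKernel_le hx.2 hs'))
    (abs_nonneg _)

lemma aestronglyMeasurable_dirichletKernel_mul
    (hf : AEStronglyMeasurable f (volume.restrict (Ioo 0 1))) (x : ℝ) :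
    AEStronglyMeasurable (fun s => dirichletKernel x s * f s) (volume.restrict (Ioo 0 1)) :=
  (continuous_dirichletKernel_right x).aestronglyMeasurable.mul hf

lemma integrableOn_dirichletKernel_mul
    (hf : AEStronglyMeasurable f (volume.restrict (Ioo 0 1)))
    (hC : ∀ s ∈ Ioo (0 : ℝ) 1, |s * (1 - s) * f s| ≤ C) (hx : x ∈ Icc (0 : ℝ) 1) :
    IntegrableOn (fun s => dirichletKernel x s * f s) (Ioo 0 1) :=
  IntegrableOn.of_bound (by simp) (aestronglyMeasurable_dirichletKernel_mul hf x) C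
    (ae_restrict_of_forall_mem measurableSet_Ioo fun _ hs => abs_dirichletKernel_mul_le hC hx hs)

lemma dirichletPotential_nonneg (hf : ∀ s ∈ Ioo (0 : ℝ) 1, 0 ≤ f s) (hx : x ∈ Icc (0 : ℝ) 1) :
    0 ≤ dirichletPotential f x :=
  setIntegral_nonneg measurableSet_Ioo fun s hs =>
    mul_nonneg (dirichletKernel_nonneg hx (Ioo_subset_Icc_self hs)) (hf s hs)

lemma dirichletPotential_le (hC : ∀ s ∈ Ioo (0 : ℝ) 1, |s * (1 - s) * f s| ≤ C)
    (hx : x ∈ Icc (0 : ℝ) 1) : dirichletPotential f x ≤ C := by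
  have h : ‖dirichletPotential f x‖ ≤ C * volume.real (Ioo (0 : ℝ) 1) :=
    norm_setIntegral_le_of_norm_le_const (by simp) fun s hs => abs_dirichletKernel_mul_le hC hx hs
  simpa using (le_abs_self _).trans h

lemma dirichletPotential_mono
    (hf : AEStronglyMeasurable f (volume.restrict (Ioo 0 1)))
    (hg : AEStronglyMeasurable g (volume.restrict (Ioo 0 1)))
    (hg' : ∀ s ∈ Ioo (0 : ℝ) 1, |s * (1 - s) * g s| ≤ C)
    (hf₀ : ∀ s ∈ Ioo (0 : ℝ) 1, 0 ≤ f s) (hfg : ∀ s ∈ Ioo (0 : ℝ) 1, f s ≤ g s)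
    (hx : x ∈ Icc (0 : ℝ) 1) : dirichletPotential f x ≤ dirichletPotential g x := by
  have hf' : ∀ s ∈ Ioo (0 : ℝ) 1, |s * (1 - s) * f s| ≤ C := fun s hs => by
    refine le_trans ?_ (hg' s hs)
    rw [abs_mul, abs_mul (s * (1 - s))]
    exact mul_le_mul_of_nonneg_left (abs_le_abs_of_nonneg (hf₀ s hs) (hfg s hs)) (abs_nonneg _)
  exact setIntegral_mono_on (integrableOn_dirichletKernel_mul hf hf' hx)
    (integrableOn_dirichletKernel_mul hg hg' hx) measurableSet_Ioo fun s hs =>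
      mul_le_mul_of_nonneg_left (hfg s hs) (dirichletKernel_nonneg hx (Ioo_subset_Icc_self hs))

lemma continuousOn_dirichletPotential
    (hf : AEStronglyMeasurable f (volume.restrict (Ioo 0 1)))
    (hC : ∀ s ∈ Ioo (0 : ℝ) 1, |s * (1 - s) * f s| ≤ C) :
    ContinuousOn (dirichletPotential f) (Icc 0 1) :=
  continuousOn_of_dominated (fun x _ => aestronglyMeasurable_dirichletKernel_mul hf x)
    (fun _ hx => ae_restrict_of_forall_mem measurableSet_Ioo fun _ hs =>
      abs_dirichletKernel_mul_le hC hx hs)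
    (integrable_const C)
    (ae_of_all _ fun s => ((continuous_uncurry_dirichletKernel.comp
      (Continuous.prodMk_left s)).mul continuous_const).continuousOn)

lemma tendsto_dirichletPotential {f : ℕ → ℝ → ℝ}
    (hf : ∀ n, AEStronglyMeasurable (f n) (volume.restrict (Ioo 0 1)))
    (hC : ∀ n, ∀ s ∈ Ioo (0 : ℝ) 1, |s * (1 - s) * f n s| ≤ C)
    (hfg : ∀ s ∈ Ioo (0 : ℝ) 1, Tendsto (fun n => f n s) atTop (𝓝 (g s)))
    (hx : x ∈ Icc (0 : ℝ) 1) :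
    Tendsto (fun n => dirichletPotential (f n) x) atTop (𝓝 (dirichletPotential g x)) :=
  tendsto_integral_of_dominated_convergence (fun _ => C)
    (fun n => aestronglyMeasurable_dirichletKernel_mul (hf n) x) (integrable_const C)
    (fun n => ae_restrict_of_forall_mem measurableSet_Ioo fun _ hs =>
      abs_dirichletKernel_mul_le (hC n) hx hs)
    (ae_restrict_of_forall_mem measurableSet_Ioo fun s hs => (hfg s hs).const_mul _)

lemma dirichletKernel_mul_eqOn_left (f : ℝ → ℝ) (hx : 0 ≤ x) :
    EqOn (fun s => dirichletKernel x s * f s) (fun s => (1 - x) * (s * f s)) (uIcc 0 x) := by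
  intro s hs
  rw [uIcc_of_le hx] at hs
  simp only [dirichletKernel, min_eq_right hs.2, max_eq_left hs.2]
  ring

lemma dirichletKernel_mul_eqOn_right (f : ℝ → ℝ) (hx : x ≤ 1) :
    EqOn (fun s => dirichletKernel x s * f s) (fun s => x * ((1 - s) * f s)) (uIcc x 1) := by
  intro s hs
  rw [uIcc_of_le hx] at hs
  simp only [dirichletKernel, min_eq_left hs.1, max_eq_right hs.1]
  ring

lemma dirichletPotential_eq (hx : x ∈ Icc (0 : ℝ) 1)
    (hl : IntervalIntegrable (fun s => s * f s) volume 0 x)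
    (hr : IntervalIntegrable (fun s => (1 - s) * f s) volume x 1) :
    dirichletPotential f x =
      (1 - x) * (∫ s in (0 : ℝ)..x, s * f s) + x * ∫ s in x..1, (1 - s) * f s := by
  have el := dirichletKernel_mul_eqOn_left f hx.1
  have er := dirichletKernel_mul_eqOn_right f hx.2
  rw [dirichletPotential_eq_intervalIntegral, ← intervalIntegral.integral_add_adjacent_intervals
      ((hl.const_mul (1 - x)).congr (el.symm.mono uIoc_subset_uIcc))
      ((hr.const_mul x).congr (er.symm.mono uIoc_subset_uIcc)),
    intervalIntegral.integral_congr el, intervalIntegral.integral_congr er,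
    intervalIntegral.integral_const_mul, intervalIntegral.integral_const_mul]

lemma dirichletPotential_const (c : ℝ) (hx : x ∈ Icc (0 : ℝ) 1) :
    dirichletPotential (fun _ => c) x = c / 2 * (x * (1 - x)) := by
  rw [dirichletPotential_eq hx (Continuous.intervalIntegrable (by fun_prop) _ _)
    (Continuous.intervalIntegrable (by fun_prop) _ _)]
  simp only [intervalIntegral.integral_mul_const, integral_id,
    intervalIntegral.integral_comp_sub_left (fun s => s), sub_self]
  ring

lemma intervalIntegrable_weight_mul (hf : AEStronglyMeasurable f (volume.restrict (Ioo 0 1)))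
    (hC : ∀ s ∈ Ioo (0 : ℝ) 1, |s * (1 - s) * f s| ≤ C) (hx : x ∈ Ioo (0 : ℝ) 1) :
    IntervalIntegrable (fun s => s * f s) volume 0 x ∧
      IntervalIntegrable (fun s => (1 - s) * f s) volume x 1 := by
  have hK : IntervalIntegrable (fun s => dirichletKernel x s * f s) volume 0 1 :=
    (intervalIntegrable_iff_integrableOn_Ioo_of_le zero_le_one).2
      (integrableOn_dirichletKernel_mul hf hC (Ioo_subset_Icc_self hx))
  have hx01 : x ∈ uIcc (0 : ℝ) 1 := by
    rw [uIcc_of_le zero_le_one]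
    exact Ioo_subset_Icc_self hx
  constructor
  · refine ((hK.mono_set (uIcc_subset_uIcc_left hx01)).const_mul (1 - x)⁻¹).congr fun s hs => ?_
    have h := dirichletKernel_mul_eqOn_left f hx.1.le (uIoc_subset_uIcc hs)
    simp only at h ⊢
    rw [h, inv_mul_cancel_left₀ (sub_pos.2 hx.2).ne']
  · refine ((hK.mono_set (uIcc_subset_uIcc_right hx01)).const_mul x⁻¹).congr fun s hs => ?_
    have h := dirichletKernel_mul_eqOn_right f hx.2.le (uIoc_subset_uIcc hs)
    simp only at h ⊢
    rw [h, inv_mul_cancel_left₀ hx.1.ne']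

lemma hasDerivAt_integral_weight_mul (hf : ContinuousOn f (Ioo 0 1))
    (hC : ∀ s ∈ Ioo (0 : ℝ) 1, |s * (1 - s) * f s| ≤ C) (hx : x ∈ Ioo (0 : ℝ) 1) :
    HasDerivAt (fun x => ∫ s in (0 : ℝ)..x, s * f s) (x * f x) x ∧
      HasDerivAt (fun x => ∫ s in x..1, (1 - s) * f s) (-((1 - x) * f x)) x := by
  have hnhds : Ioo (0 : ℝ) 1 ∈ 𝓝 x := isOpen_Ioo.mem_nhds hx
  have hcl : ContinuousOn (fun s => s * f s) (Ioo 0 1) := continuousOn_id.mul hf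
  have hcr : ContinuousOn (fun s => (1 - s) * f s) (Ioo 0 1) :=
    (continuousOn_const.sub continuousOn_id).mul hf
  obtain ⟨hl, hr⟩ :=
    intervalIntegrable_weight_mul (hf.aestronglyMeasurable measurableSet_Ioo) hC hx
  exact ⟨intervalIntegral.integral_hasDerivAt_right hl
      (hcl.stronglyMeasurableAtFilter isOpen_Ioo x hx) (hcl.continuousAt hnhds),
    intervalIntegral.integral_hasDerivAt_left hr
      (hcr.stronglyMeasurableAtFilter isOpen_Ioo x hx) (hcr.continuousAt hnhds)⟩

lemma hasDerivAt_dirichletPotential (hf : ContinuousOn f (Ioo 0 1))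
    (hC : ∀ s ∈ Ioo (0 : ℝ) 1, |s * (1 - s) * f s| ≤ C) (hx : x ∈ Ioo (0 : ℝ) 1) :
    HasDerivAt (dirichletPotential f) (dirichletSlope f x) x := by
  obtain ⟨hl, hr⟩ := hasDerivAt_integral_weight_mul hf hC hx
  have h := (((hasDerivAt_id x).const_sub 1).mul hl).add ((hasDerivAt_id x).mul hr)
  refine (h.congr_of_eventuallyEq ?_).congr_deriv (by simp only [dirichletSlope, id]; ring)
  filter_upwards [isOpen_Ioo.mem_nhds hx] with y hy
  obtain ⟨il, ir⟩ :=
    intervalIntegrable_weight_mul (hf.aestronglyMeasurable measurableSet_Ioo) hC hy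
  exact dirichletPotential_eq (Ioo_subset_Icc_self hy) il ir

lemma hasDerivAt_dirichletSlope (hf : ContinuousOn f (Ioo 0 1))
    (hC : ∀ s ∈ Ioo (0 : ℝ) 1, |s * (1 - s) * f s| ≤ C) (hx : x ∈ Ioo (0 : ℝ) 1) :
    HasDerivAt (dirichletSlope f) (-f x) x := by
  obtain ⟨hl, hr⟩ := hasDerivAt_integral_weight_mul hf hC hx
  exact (hr.sub hl).congr_deriv (by ring)

end DirichletPotential

/-! ### The singular Dirichlet problem -/

lemma log_add_sub_log_add_le {ε N X Z d : ℝ} (hε : 0 < ε) (hZ : 0 ≤ Z) (hZN : Z ≤ N)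
    (hd : 0 ≤ d) (h : Z ≤ exp d * X) : log (ε + Z) - log (ε + X) ≤ N / (ε + N) * d := by
  set p := Z / (ε + Z) with hp
  have hεZ : 0 < ε + Z := by positivity
  have hp₀ : 0 ≤ p := by positivity
  have hp₁ : p ≤ 1 := (div_le_one hεZ).2 (by linarith)
  have hpN : p ≤ N / (ε + N) := by
    rw [hp, div_le_div_iff₀ hεZ (by linarith)]
    nlinarith
  have hconv : exp (-(p * d)) ≤ (1 - p) + p * exp (-d) := by
    simpa using convexOn_exp.2 (mem_univ 0) (mem_univ (-d)) (sub_nonneg.2 hp₁) hp₀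
      (sub_add_cancel 1 p)
  have hX : (ε + Z) * exp (-(p * d)) ≤ ε + X :=
    calc (ε + Z) * exp (-(p * d)) ≤ (ε + Z) * ((1 - p) + p * exp (-d)) := by gcongr
      _ = ε + exp (-d) * Z := by rw [hp]; field_simp; ring
      _ ≤ ε + X := by rw [exp_neg]; gcongr; exact (inv_mul_le_iff₀ (exp_pos d)).2 h
  have hlog := log_le_log (by positivity) hX
  rw [log_mul hεZ.ne' (exp_pos _).ne', log_exp] at hlog
  linarith [mul_le_mul_of_nonneg_right hpN hd]

/- Measured in `log`, the map `T` is nonexpansive; adding `ε` to a value at most `N` makes it a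
contraction with ratio `N / (ε + N)`. -/
lemma exists_exp_eq_add {Y : Type*} [TopologicalSpace Y] [CompactSpace Y] {ε N : ℝ} (hε : 0 < ε)
    (hN : 0 ≤ N) (T : C(Y, ℝ) → C(Y, ℝ)) (hT₀ : ∀ f y, 0 ≤ T f y) (hTN : ∀ f y, T f y ≤ N)
    (hT : ∀ f g y, T f y ≤ exp (dist f g) * T g y) :
    ∃ f : C(Y, ℝ), ∀ y, exp (f y) = ε + T f y := by
  have hpos : ∀ f y, 0 < ε + T f y := fun f y => by linarith [hT₀ f y]
  let S : C(Y, ℝ) → C(Y, ℝ) := fun f =>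
    ⟨fun y => log (ε + T f y), (by fun_prop : Continuous fun y => ε + T f y).log
      fun y => (hpos f y).ne'⟩
  have hθ₀ : 0 ≤ N / (ε + N) := by positivity
  have hθ₁ : N / (ε + N) < 1 := (div_lt_one (by positivity)).2 (by linarith)
  have hle : ∀ f g y, S f y - S g y ≤ N / (ε + N) * dist f g := fun f g y =>
    log_add_sub_log_add_le hε (hT₀ f y) (hTN f y) dist_nonneg (hT f g y)
  have hS : ContractingWith ⟨N / (ε + N), hθ₀⟩ S := by
    refine ⟨hθ₁, LipschitzWith.of_dist_le_mul fun f g => ?_⟩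
    refine (ContinuousMap.dist_le (mul_nonneg hθ₀ dist_nonneg)).2 fun y => ?_
    rw [Real.dist_eq]
    exact abs_sub_le_iff.2 ⟨hle f g y, dist_comm f g ▸ hle g f y⟩
  refine ⟨ContractingWith.fixedPoint S hS, fun y => ?_⟩
  have hfix : S (ContractingWith.fixedPoint S hS) y = _ :=
    DFunLike.congr_fun hS.fixedPoint_isFixedPt y
  rw [← hfix]
  exact exp_log (hpos _ y)

/-- `u` solves the singular Dirichlet problem `-u'' = a / u` on `[0, 1]`, `u = ε` at both ends, in
integral form. The lower bound keeps the source `a / u` integrable against the Green kernel when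
`ε = 0`. -/
structure IsSingularDirichletSolution (a : ℝ → ℝ) (ε : ℝ) (u : ℝ → ℝ) : Prop where
  continuousOn : ContinuousOn u (Icc 0 1)
  exists_mul_le : ∃ κ > 0, ∀ x ∈ Icc (0 : ℝ) 1, κ * (x * (1 - x)) ≤ u x
  eq_add_potential : ∀ x ∈ Icc (0 : ℝ) 1, u x = ε + dirichletPotential (fun s => a s / u s) x

lemma mul_one_sub_pos {s : ℝ} (hs : s ∈ Ioo (0 : ℝ) 1) : 0 < s * (1 - s) :=
  mul_pos hs.1 (sub_pos.2 hs.2)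

lemma abs_weight_mul_div_le {κ A s α w : ℝ} (hκ : 0 < κ) (hs : s ∈ Ioo (0 : ℝ) 1)
    (hα : |α| ≤ A) (hw : κ * (s * (1 - s)) ≤ w) : |s * (1 - s) * (α / w)| ≤ A / κ := by
  have hs₀ := mul_one_sub_pos hs
  have hw₀ : 0 < w := (mul_pos hκ hs₀).trans_le hw
  rw [abs_mul, abs_div, abs_of_pos hs₀, abs_of_pos hw₀, ← mul_div_assoc,
    div_le_div_iff₀ hw₀ hκ]
  calc s * (1 - s) * |α| * κ = |α| * (κ * (s * (1 - s))) := by ring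
    _ ≤ A * w := mul_le_mul hα hw (by positivity) ((abs_nonneg α).trans hα)

/-- The source `a / exp f`, with `exp f` truncated below at `ε`. The truncation bounds the source
without excluding any solution, because every solution is at least its boundary value `ε`. -/
def truncatedSource (a : ℝ → ℝ) (ε : ℝ) (f : C(Icc (0 : ℝ) 1, ℝ)) (s : ℝ) : ℝ :=
  a s * exp (-max (IccExtend zero_le_one f s) (log ε))

section TruncatedSource

variable {a : ℝ → ℝ} {ε A : ℝ} {s : ℝ}

lemma aestronglyMeasurable_truncatedSource (ha : ContinuousOn a (Icc 0 1))
    (f : C(Icc (0 : ℝ) 1, ℝ)) :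
    AEStronglyMeasurable (truncatedSource a ε f) (volume.restrict (Ioo 0 1)) := by
  have : Continuous (IccExtend (zero_le_one' ℝ) f) := f.continuous.Icc_extend'
  exact ((ha.mono Ioo_subset_Icc_self).mul (by fun_prop)).aestronglyMeasurable measurableSet_Ioo

lemma abs_weight_mul_truncatedSource_le (hε : 0 < ε) (hA : ∀ x ∈ Icc (0 : ℝ) 1, |a x| ≤ A)
    (f : C(Icc (0 : ℝ) 1, ℝ)) (hs : s ∈ Ioo (0 : ℝ) 1) :
    |s * (1 - s) * truncatedSource a ε f s| ≤ A / ε := by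
  rw [truncatedSource, exp_neg, ← div_eq_mul_inv]
  refine abs_weight_mul_div_le hε hs (hA s (Ioo_subset_Icc_self hs)) ?_
  calc ε * (s * (1 - s)) ≤ ε * 1 := by gcongr; nlinarith [hs.1, hs.2]
    _ = exp (log ε) := by rw [mul_one, exp_log hε]
    _ ≤ exp (max (IccExtend zero_le_one f s) (log ε)) := exp_le_exp.2 (le_max_right _ _)

lemma truncatedSource_nonneg (ha : 0 ≤ a s) (f : C(Icc (0 : ℝ) 1, ℝ)) :
    0 ≤ truncatedSource a ε f s :=
  mul_nonneg ha (exp_pos _).le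

lemma truncatedSource_le (ha : 0 ≤ a s) (f g : C(Icc (0 : ℝ) 1, ℝ)) :
    truncatedSource a ε f s ≤ exp (dist f g) * truncatedSource a ε g s := by
  have hdist : |IccExtend zero_le_one f s - IccExtend zero_le_one g s| ≤ dist f g := by
    rw [← Real.dist_eq]
    exact ContinuousMap.dist_apply_le_dist _
  have hmax := (abs_max_sub_max_le_abs _ _ (log ε)).trans hdist
  rw [truncatedSource, truncatedSource, mul_left_comm, ← exp_add]
  gcongr
  linarith [(abs_le.1 hmax).1]

lemma truncatedSource_eq_div {f : C(Icc (0 : ℝ) 1, ℝ)} (hε : 0 < ε)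
    (hf : ε ≤ exp (IccExtend zero_le_one f s)) :
    truncatedSource a ε f s = a s / exp (IccExtend zero_le_one f s) := by
  rw [truncatedSource, max_eq_left ((log_le_iff_le_exp hε).2 hf), exp_neg, div_eq_mul_inv]

lemma dirichletPotential_truncatedSource_le (hε : 0 < ε) (ha : ContinuousOn a (Icc 0 1))
    (ha₀ : ∀ x ∈ Icc (0 : ℝ) 1, 0 ≤ a x) (hA : ∀ x ∈ Icc (0 : ℝ) 1, |a x| ≤ A)
    (f g : C(Icc (0 : ℝ) 1, ℝ)) {x : ℝ} (hx : x ∈ Icc (0 : ℝ) 1) :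
    dirichletPotential (truncatedSource a ε f) x ≤
      exp (dist f g) * dirichletPotential (truncatedSource a ε g) x := by
  rw [← dirichletPotential_const_mul]
  refine dirichletPotential_mono (C := exp (dist f g) * (A / ε))
    (aestronglyMeasurable_truncatedSource ha f)
    ((aestronglyMeasurable_truncatedSource ha g).const_mul _) (fun s hs => ?_)
    (fun s hs => truncatedSource_nonneg (ha₀ s (Ioo_subset_Icc_self hs)) f)
    (fun s hs => truncatedSource_le (ha₀ s (Ioo_subset_Icc_self hs)) f g) hx
  rw [mul_left_comm, abs_mul, abs_of_pos (exp_pos _)]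
  gcongr
  exact abs_weight_mul_truncatedSource_le hε hA g hs

end TruncatedSource

lemma exists_isSingularDirichletSolution_of_pos {a : ℝ → ℝ} {ε : ℝ} (hε : 0 < ε)
    (ha : ContinuousOn a (Icc 0 1)) (ha₀ : ∀ x ∈ Icc (0 : ℝ) 1, 0 ≤ a x) :
    ∃ u, IsSingularDirichletSolution a ε u := by
  obtain ⟨A, hA⟩ := isCompact_Icc.exists_bound_of_continuousOn ha
  have hA₀ : 0 ≤ A := (norm_nonneg _).trans (hA 0 (by simp))
  have hnonneg : ∀ f, ∀ x ∈ Icc (0 : ℝ) 1, 0 ≤ dirichletPotential (truncatedSource a ε f) x :=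
    fun f x => dirichletPotential_nonneg fun s hs =>
      truncatedSource_nonneg (ha₀ s (Ioo_subset_Icc_self hs)) f
  have hbound := fun f s => abs_weight_mul_truncatedSource_le (s := s) hε hA f
  let T (f : C(Icc (0 : ℝ) 1, ℝ)) : C(Icc (0 : ℝ) 1, ℝ) :=
    ⟨fun x => dirichletPotential (truncatedSource a ε f) x,
      (continuousOn_dirichletPotential (aestronglyMeasurable_truncatedSource ha f)
        (hbound f)).domRestrict⟩
  obtain ⟨f, hf⟩ := exists_exp_eq_add (N := A / ε) hε (by positivity) T
    (fun f x => hnonneg f x x.2) (fun f x => dirichletPotential_le (hbound f) x.2)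
    (fun f g x => dirichletPotential_truncatedSource_le hε ha ha₀ hA f g x.2)
  have heq : ∀ x ∈ Icc (0 : ℝ) 1, exp (IccExtend zero_le_one f x) =
      ε + dirichletPotential (truncatedSource a ε f) x := fun x hx => by
    rw [IccExtend_of_mem zero_le_one f hx, hf]
    rfl
  have hεf : ∀ x ∈ Icc (0 : ℝ) 1, ε ≤ exp (IccExtend zero_le_one f x) := fun x hx => by
    linarith [heq x hx, hnonneg f x hx]
  refine ⟨fun x => exp (IccExtend zero_le_one f x),
    (continuous_exp.comp f.continuous.Icc_extend').continuousOn, ⟨ε, hε, fun x hx => ?_⟩,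
    fun x hx => ?_⟩
  · exact (mul_le_of_le_one_right hε.le (by nlinarith [hx.1, hx.2])).trans (hεf x hx)
  · rw [heq x hx, dirichletPotential_congr fun s hs =>
      truncatedSource_eq_div hε (hεf s (Ioo_subset_Icc_self hs))]

lemma not_isLocalMax_of_hasDerivAt_pos {w v : ℝ → ℝ} {x c : ℝ}
    (hw : ∀ᶠ y in 𝓝 x, HasDerivAt w (v y) y) (hv : HasDerivAt v c x) (hc : 0 < c) :
    ¬IsLocalMax w x := by
  intro hmax
  have hw₁ : deriv w =ᶠ[𝓝 x] v := hw.mono fun y hy => hy.deriv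
  have hw₂ : deriv (deriv w) x = c := by rw [hw₁.deriv_eq, hv.deriv]
  have hmin : IsLocalMin w x := isLocalMin_of_deriv_deriv_pos (hw₂ ▸ hc) hmax.deriv_eq_zero
    hw.self_of_nhds.continuousAt
  have hconst : w =ᶠ[𝓝 x] fun _ => w x := by
    filter_upwards [hmax, hmin] with y h₁ h₂ using le_antisymm h₁ h₂
  have h₀ : deriv (deriv w) x = 0 := by simpa using hconst.deriv.deriv_eq
  linarith

namespace IsSingularDirichletSolution

variable {a u : ℝ → ℝ} {ε x : ℝ}

lemma pos (h : IsSingularDirichletSolution a ε u) (hx : x ∈ Ioo (0 : ℝ) 1) : 0 < u x := by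
  obtain ⟨κ, hκ, hlow⟩ := h.exists_mul_le
  exact (mul_pos hκ (mul_one_sub_pos hx)).trans_le (hlow x (Ioo_subset_Icc_self hx))

lemma apply_zero (h : IsSingularDirichletSolution a ε u) : u 0 = ε := by
  rw [h.eq_add_potential 0 (by simp), dirichletPotential_zero_right, add_zero]

lemma apply_one (h : IsSingularDirichletSolution a ε u) : u 1 = ε := by
  rw [h.eq_add_potential 1 (by simp), dirichletPotential_one_right, add_zero]

lemma boundary_nonneg (h : IsSingularDirichletSolution a ε u) : 0 ≤ ε := by
  obtain ⟨κ, -, hlow⟩ := h.exists_mul_le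
  simpa [h.apply_zero] using hlow 0 (by simp)

lemma continuousOn_div (h : IsSingularDirichletSolution a ε u) (ha : ContinuousOn a (Icc 0 1)) :
    ContinuousOn (fun s => a s / u s) (Ioo 0 1) :=
  (ha.mono Ioo_subset_Icc_self).div (h.continuousOn.mono Ioo_subset_Icc_self)
    fun _ hs => (h.pos hs).ne'

lemma aestronglyMeasurable_div (h : IsSingularDirichletSolution a ε u)
    (ha : ContinuousOn a (Icc 0 1)) :
    AEStronglyMeasurable (fun s => a s / u s) (volume.restrict (Ioo 0 1)) :=
  (h.continuousOn_div ha).aestronglyMeasurable measurableSet_Ioo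

lemma exists_weight_mul_div_le (h : IsSingularDirichletSolution a ε u)
    (ha : ContinuousOn a (Icc 0 1)) :
    ∃ C, ∀ s ∈ Ioo (0 : ℝ) 1, |s * (1 - s) * (a s / u s)| ≤ C := by
  obtain ⟨A, hA⟩ := isCompact_Icc.exists_bound_of_continuousOn ha
  obtain ⟨κ, hκ, hlow⟩ := h.exists_mul_le
  exact ⟨A / κ, fun s hs => abs_weight_mul_div_le hκ hs (hA s (Ioo_subset_Icc_self hs))
    (hlow s (Ioo_subset_Icc_self hs))⟩

lemma hasDerivAt (h : IsSingularDirichletSolution a ε u) (ha : ContinuousOn a (Icc 0 1))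
    (hx : x ∈ Ioo (0 : ℝ) 1) : HasDerivAt u (dirichletSlope (fun s => a s / u s) x) x := by
  obtain ⟨C, hC⟩ := h.exists_weight_mul_div_le ha
  refine ((hasDerivAt_dirichletPotential (h.continuousOn_div ha) hC hx).const_add
    ε).congr_of_eventuallyEq ?_
  filter_upwards [Icc_mem_nhds hx.1 hx.2] with y hy using h.eq_add_potential y hy

lemma hasDerivAt_slope (h : IsSingularDirichletSolution a ε u) (ha : ContinuousOn a (Icc 0 1))
    (hx : x ∈ Ioo (0 : ℝ) 1) :
    HasDerivAt (dirichletSlope fun s => a s / u s) (-(a x / u x)) x := by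
  obtain ⟨C, hC⟩ := h.exists_weight_mul_div_le ha
  exact hasDerivAt_dirichletSlope (h.continuousOn_div ha) hC hx

lemma le_of_boundary_le {u₁ u₂ : ℝ → ℝ} {ε₁ ε₂ : ℝ} (h₁ : IsSingularDirichletSolution a ε₁ u₁)
    (h₂ : IsSingularDirichletSolution a ε₂ u₂) (ha : ContinuousOn a (Icc 0 1))
    (ha₀ : ∀ x ∈ Icc (0 : ℝ) 1, 0 < a x) (hε : ε₁ ≤ ε₂) (hx : x ∈ Icc (0 : ℝ) 1) :
    u₁ x ≤ u₂ x := by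
  by_contra! hlt
  obtain ⟨z, hz, hmax⟩ :=
    isCompact_Icc.exists_isMaxOn ⟨x, hx⟩ (h₁.continuousOn.sub h₂.continuousOn)
  have hpos : 0 < u₁ z - u₂ z := (sub_pos.2 hlt).trans_le (hmax hx)
  have hz₀ : z ≠ 0 := by
    rintro rfl
    rw [h₁.apply_zero, h₂.apply_zero] at hpos
    linarith
  have hz₁ : z ≠ 1 := by
    rintro rfl
    rw [h₁.apply_one, h₂.apply_one] at hpos
    linarith
  have hz' : z ∈ Ioo (0 : ℝ) 1 := ⟨lt_of_le_of_ne hz.1 hz₀.symm, lt_of_le_of_ne hz.2 hz₁⟩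
  refine not_isLocalMax_of_hasDerivAt_pos ?_
    ((h₁.hasDerivAt_slope ha hz').sub (h₂.hasDerivAt_slope ha hz')) ?_
    (hmax.isLocalMax (Icc_mem_nhds hz'.1 hz'.2))
  · filter_upwards [isOpen_Ioo.mem_nhds hz'] with y hy
      using (h₁.hasDerivAt ha hy).sub (h₂.hasDerivAt ha hy)
  · linarith [div_lt_div_of_pos_left (ha₀ z hz) (h₂.pos hz') (sub_pos.1 hpos)]

lemma mul_le_of_le {a₀ M : ℝ} (h : IsSingularDirichletSolution a ε u)
    (ha : ContinuousOn a (Icc 0 1)) (ha₀ : 0 ≤ a₀) (haa₀ : ∀ x ∈ Icc (0 : ℝ) 1, a₀ ≤ a x)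
    (hM : ∀ x ∈ Icc (0 : ℝ) 1, u x ≤ M) (hx : x ∈ Icc (0 : ℝ) 1) :
    a₀ / M / 2 * (x * (1 - x)) ≤ u x := by
  have hM₀ : 0 < M := (h.pos (x := 1 / 2) (by norm_num)).trans_le (hM _ (by norm_num))
  obtain ⟨C, hC⟩ := h.exists_weight_mul_div_le ha
  rw [h.eq_add_potential x hx, ← dirichletPotential_const _ hx]
  refine (dirichletPotential_mono aestronglyMeasurable_const (h.aestronglyMeasurable_div ha) hC
    (fun s _ => by positivity) (fun s hs => ?_) hx).trans
      (le_add_of_nonneg_left h.boundary_nonneg)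
  have hs' := Ioo_subset_Icc_self hs
  exact div_le_div₀ (ha₀.trans (haa₀ s hs')) (haa₀ s hs') (h.pos hs) (hM s hs')

lemma of_tendsto {u : ℕ → ℝ → ℝ} {ε : ℕ → ℝ} {q : ℝ → ℝ} {ε₀ κ : ℝ}
    (h : ∀ n, IsSingularDirichletSolution a (ε n) (u n)) (ha : ContinuousOn a (Icc 0 1))
    (hκ : 0 < κ) (hlow : ∀ n, ∀ x ∈ Icc (0 : ℝ) 1, κ * (x * (1 - x)) ≤ u n x)
    (hε : Tendsto ε atTop (𝓝 ε₀))
    (hu : ∀ x ∈ Icc (0 : ℝ) 1, Tendsto (fun n => u n x) atTop (𝓝 (q x))) :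
    IsSingularDirichletSolution a ε₀ q := by
  obtain ⟨A, hA⟩ := isCompact_Icc.exists_bound_of_continuousOn ha
  have hqlow : ∀ x ∈ Icc (0 : ℝ) 1, κ * (x * (1 - x)) ≤ q x := fun x hx =>
    ge_of_tendsto' (hu x hx) fun n => hlow n x hx
  have hbound : ∀ w : ℝ → ℝ, (∀ x ∈ Icc (0 : ℝ) 1, κ * (x * (1 - x)) ≤ w x) →
      ∀ s ∈ Ioo (0 : ℝ) 1, |s * (1 - s) * (a s / w s)| ≤ A / κ := fun w hw s hs =>
    abs_weight_mul_div_le hκ hs (hA s (Ioo_subset_Icc_self hs)) (hw s (Ioo_subset_Icc_self hs))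
  have hdiv : ∀ s ∈ Ioo (0 : ℝ) 1, Tendsto (fun n => a s / u n s) atTop (𝓝 (a s / q s)) :=
    fun s hs => tendsto_const_nhds.div (hu s (Ioo_subset_Icc_self hs))
      ((mul_pos hκ (mul_one_sub_pos hs)).trans_le (hqlow s (Ioo_subset_Icc_self hs))).ne'
  have hmeas : AEStronglyMeasurable (fun s => a s / q s) (volume.restrict (Ioo 0 1)) :=
    aestronglyMeasurable_of_tendsto_ae atTop (fun n => (h n).aestronglyMeasurable_div ha)
      (ae_restrict_of_forall_mem measurableSet_Ioo hdiv)
  have heq : ∀ x ∈ Icc (0 : ℝ) 1, q x = ε₀ + dirichletPotential (fun s => a s / q s) x :=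
    fun x hx => tendsto_nhds_unique (hu x hx) <|
      (hε.add (tendsto_dirichletPotential (fun n => (h n).aestronglyMeasurable_div ha)
        (fun n => hbound (u n) (hlow n)) hdiv hx)).congr fun n => ((h n).eq_add_potential x hx).symm
  exact ⟨((continuousOn_dirichletPotential hmeas (hbound q hqlow)).const_add ε₀).congr heq,
    ⟨κ, hκ, hqlow⟩, heq⟩

lemma reflect (h : IsSingularDirichletSolution a ε u) :
    IsSingularDirichletSolution (fun x => a (1 - x)) ε fun x => u (1 - x) where
  continuousOn := h.continuousOn.comp (by fun_prop) fun x hx =>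
    ⟨sub_nonneg.2 hx.2, sub_le_self 1 hx.1⟩
  exists_mul_le := by
    obtain ⟨κ, hκ, hlow⟩ := h.exists_mul_le
    refine ⟨κ, hκ, fun x hx => ?_⟩
    rw [mul_comm x]
    simpa only [sub_sub_cancel] using hlow (1 - x) ⟨sub_nonneg.2 hx.2, sub_le_self 1 hx.1⟩
  eq_add_potential x hx := by
    rw [h.eq_add_potential (1 - x) ⟨sub_nonneg.2 hx.2, sub_le_self 1 hx.1⟩,
      dirichletPotential_one_sub]

lemma le_mul_of_slope_le {M : ℝ} (h : IsSingularDirichletSolution a 0 u)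
    (ha : ContinuousOn a (Icc 0 1))
    (hM : ∀ x ∈ Ioo (0 : ℝ) 1, dirichletSlope (fun s => a s / u s) x ≤ M)
    (hx : x ∈ Icc (0 : ℝ) 1) : u x ≤ M * x := by
  have hd : ∀ z ∈ interior (Icc (0 : ℝ) 1),
      HasDerivAt u (dirichletSlope (fun s => a s / u s) z) z := fun z hz =>
    h.hasDerivAt ha (by rwa [interior_Icc] at hz)
  simpa [h.apply_zero] using Convex.image_sub_le_mul_sub_of_deriv_le (convex_Icc 0 1)
    h.continuousOn (fun z hz => (hd z hz).differentiableAt.differentiableWithinAt)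
    (fun z hz => (hd z hz).deriv.trans_le (hM z (by rwa [interior_Icc] at hz))) 0 (by simp) x hx
    hx.1

lemma antitoneOn_slope_add_log {a₀ M : ℝ} (h : IsSingularDirichletSolution a ε u)
    (ha : ContinuousOn a (Icc 0 1)) (ha₀ : 0 ≤ a₀) (haa₀ : ∀ x ∈ Icc (0 : ℝ) 1, a₀ ≤ a x)
    (hM : ∀ x ∈ Icc (0 : ℝ) 1, u x ≤ M * x) :
    AntitoneOn (fun x => dirichletSlope (fun s => a s / u s) x + a₀ / M * log x) (Ioo 0 1) := by
  have hd : ∀ x ∈ Ioo (0 : ℝ) 1,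
      HasDerivAt (fun x => dirichletSlope (fun s => a s / u s) x + a₀ / M * log x)
        (-(a x / u x) + a₀ / M * x⁻¹) x := fun x hx =>
    (h.hasDerivAt_slope ha hx).add ((hasDerivAt_log hx.1.ne').const_mul _)
  refine antitoneOn_of_deriv_nonpos (convex_Ioo _ _)
    (fun z hz => (hd z hz).continuousAt.continuousWithinAt) ?_ ?_ <;> rw [interior_Ioo]
  · exact fun z hz => (hd z hz).differentiableAt.differentiableWithinAt
  · intro z hz
    have hz' := Ioo_subset_Icc_self hz
    have hle : a₀ / (M * z) ≤ a z / u z :=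
      div_le_div₀ (ha₀.trans (haa₀ z hz')) (haa₀ z hz') (h.pos hz) (hM z hz')
    rw [(hd z hz).deriv, ← div_eq_mul_inv, div_div]
    linarith

lemma exists_lt_slope (h : IsSingularDirichletSolution a 0 u) (ha : ContinuousOn a (Icc 0 1))
    (ha₀ : ∀ x ∈ Icc (0 : ℝ) 1, 0 < a x) (M : ℝ) :
    ∃ x ∈ Ioo (0 : ℝ) 1, M < dirichletSlope (fun s => a s / u s) x := by
  by_contra! hM
  obtain ⟨z, hz, hmin⟩ := isCompact_Icc.exists_isMinOn ⟨0, by simp⟩ ha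
  have hhalf : (1 / 2 : ℝ) ∈ Ioo (0 : ℝ) 1 := by norm_num
  have hle : ∀ x ∈ Icc (0 : ℝ) 1, u x ≤ M * x := fun x => h.le_mul_of_slope_le ha hM
  have hM₀ : 0 < M := by linarith [h.pos hhalf, hle _ (Ioo_subset_Icc_self hhalf)]
  have hκ : 0 < a z / M := div_pos (ha₀ z hz) hM₀
  have hanti := h.antitoneOn_slope_add_log ha (ha₀ z hz).le (fun x hx => hmin hx) hle
  set c := dirichletSlope (fun s => a s / u s) (1 / 2) + a z / M * log (1 / 2)
  obtain ⟨x, hlog, hx⟩ := ((tendsto_log_nhdsGT_zero.eventually_lt_atBot ((c - M) / (a z / M))).and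
    (Ioo_mem_nhdsGT hhalf.1)).exists
  have hx' : x ∈ Ioo (0 : ℝ) 1 := ⟨hx.1, hx.2.trans hhalf.2⟩
  have hcx : c ≤ dirichletSlope (fun s => a s / u s) x + a z / M * log x :=
    hanti hx' hhalf hx.2.le
  rw [lt_div_iff₀' hκ] at hlog
  linarith [hM x hx']

lemma exists_slope_lt (h : IsSingularDirichletSolution a 0 u) (ha : ContinuousOn a (Icc 0 1))
    (ha₀ : ∀ x ∈ Icc (0 : ℝ) 1, 0 < a x) (M : ℝ) :
    ∃ x ∈ Ioo (0 : ℝ) 1, dirichletSlope (fun s => a s / u s) x < M := by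
  have hI : ∀ x ∈ Icc (0 : ℝ) 1, 1 - x ∈ Icc (0 : ℝ) 1 := fun x hx =>
    ⟨sub_nonneg.2 hx.2, sub_le_self 1 hx.1⟩
  obtain ⟨x, hx, hlt⟩ := h.reflect.exists_lt_slope (ha.comp (by fun_prop) hI)
    (fun x hx => ha₀ _ (hI x hx)) (-M)
  refine ⟨1 - x, ⟨sub_pos.2 hx.2, sub_lt_self 1 hx.1⟩, ?_⟩
  rw [dirichletSlope_one_sub]
  linarith

end IsSingularDirichletSolution

lemma exists_isSingularDirichletSolution_zero {a : ℝ → ℝ} (ha : ContinuousOn a (Icc 0 1))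
    (ha₀ : ∀ x ∈ Icc (0 : ℝ) 1, 0 < a x) : ∃ u, IsSingularDirichletSolution a 0 u := by
  choose u hu using fun n : ℕ => exists_isSingularDirichletSolution_of_pos
    (Nat.one_div_pos_of_nat (α := ℝ) (n := n)) ha fun x hx => (ha₀ x hx).le
  have hanti : ∀ x ∈ Icc (0 : ℝ) 1, Antitone fun n => u n x := fun x hx m n hmn =>
    (hu n).le_of_boundary_le (hu m) ha ha₀ (Nat.one_div_le_one_div hmn) hx
  obtain ⟨M, hM⟩ := isCompact_Icc.exists_bound_of_continuousOn (hu 0).continuousOn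
  have huM : ∀ n, ∀ x ∈ Icc (0 : ℝ) 1, u n x ≤ M := fun n x hx =>
    (hanti x hx n.zero_le).trans ((le_abs_self _).trans (hM x hx))
  have hM₀ : 0 < M := ((hu 0).pos (x := 1 / 2) (by norm_num)).trans_le (huM 0 _ (by norm_num))
  obtain ⟨z, hz, hmin⟩ := isCompact_Icc.exists_isMinOn ⟨0, by simp⟩ ha
  have hκ : 0 < a z / M / 2 := by have := ha₀ z hz; positivity
  have hlow : ∀ n, ∀ x ∈ Icc (0 : ℝ) 1, a z / M / 2 * (x * (1 - x)) ≤ u n x := fun n x =>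
    (hu n).mul_le_of_le ha (ha₀ z hz).le (fun y hy => hmin hy) (huM n)
  refine ⟨fun x => ⨅ n, u n x, .of_tendsto hu ha hκ hlow tendsto_one_div_add_atTop_nhds_zero_nat
    fun x hx => tendsto_atTop_ciInf (hanti x hx) ⟨a z / M / 2 * (x * (1 - x)), ?_⟩⟩
  rintro _ ⟨n, rfl⟩
  exact hlow n x hx

/-! ### The normalized profile -/

lemma exists_rightInverse_hasDerivAt {Y Y' : ℝ → ℝ} {S : Set ℝ} (hS : S.OrdConnected)
    (hY : ∀ x ∈ S, HasDerivAt Y (Y' x) x) (hY' : ∀ x ∈ S, 0 < Y' x)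
    (hlo : ∀ y, ∃ x ∈ S, Y x ≤ y) (hhi : ∀ y, ∃ x ∈ S, y ≤ Y x) :
    ∃ X : ℝ → ℝ, ∀ y, X y ∈ S ∧ Y (X y) = y ∧ HasDerivAt X (Y' (X y))⁻¹ y := by
  have hcont : ContinuousOn Y S := fun x hx => (hY x hx).continuousAt.continuousWithinAt
  have hmono : StrictMonoOn Y S := strictMonoOn_of_deriv_pos hS.convex hcont fun x hx => by
    rw [(hY x (interior_subset hx)).deriv]
    exact hY' x (interior_subset hx)
  have hsurj : Y '' S = univ := eq_univ_of_forall fun y => by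
    obtain ⟨x₁, hx₁, h₁⟩ := hlo y
    obtain ⟨x₂, hx₂, h₂⟩ := hhi y
    exact hS.isPreconnected.intermediate_value hx₁ hx₂ hcont ⟨h₁, h₂⟩
  let e : S ≃o ℝ := (hmono.orderIso Y S).trans ((OrderIso.setCongr _ _ hsurj).trans
    OrderIso.Set.univ)
  have hinv : ∀ y, Y (e.symm y) = y := e.apply_symm_apply
  have hX : Continuous fun y => (e.symm y : ℝ) := continuous_subtype_val.comp e.symm.continuous
  exact ⟨fun y => e.symm y, fun y => ⟨(e.symm y).2, hinv y,
    (hY _ (e.symm y).2).of_local_left_inverse hX.continuousAt (hY' _ (e.symm y).2).ne'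
      (Eventually.of_forall hinv)⟩⟩

lemma le_mul_exp_neg_sq_of_hasDerivAt {F g : ℝ → ℝ} {c : ℝ} (hF : ∀ y, 0 ≤ F y)
    (hd : ∀ y, HasDerivAt F (-(y * g y * F y)) y) (hc : ∀ y, 2 * c ≤ g y) (y : ℝ) :
    F y ≤ F 0 * exp (-(c * y ^ 2)) := by
  have hW : ∀ y, HasDerivAt (fun y => F y * exp (c * y ^ 2))
      (-(y * (F y * exp (c * y ^ 2) * (g y - 2 * c)))) y := fun y =>
    ((hd y).mul ((hasDerivAt_pow 2 y).const_mul c).exp).congr_deriv (by push_cast; ring)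
  have hdiff : Differentiable ℝ fun y => F y * exp (c * y ^ 2) := fun y => (hW y).differentiableAt
  have hnonneg : ∀ y, 0 ≤ F y * exp (c * y ^ 2) * (g y - 2 * c) := fun y =>
    mul_nonneg (mul_nonneg (hF y) (exp_pos _).le) (sub_nonneg.2 (hc y))
  have hmax : IsMaxOn (fun y => F y * exp (c * y ^ 2)) univ 0 :=
    isMaxOn_univ_of_deriv (hW 0).continuousAt hdiff.differentiableOn hdiff.differentiableOn
      (fun z hz => (hW z).deriv ▸ neg_nonneg.2 (mul_nonpos_of_nonpos_of_nonneg
        (le_of_lt hz) (hnonneg z)))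
      (fun z hz => (hW z).deriv ▸ neg_nonpos.2 (mul_nonneg (le_of_lt hz) (hnonneg z)))
  rw [exp_neg, ← div_eq_mul_inv, le_div_iff₀ (exp_pos _)]
  simpa using hmax (mem_univ y)

lemma one_add_abs_mul_exp_neg_sq_le {c : ℝ} (hc : 0 < c) (y : ℝ) :
    (1 + |y|) * exp (-(c * y ^ 2)) ≤ (2 + 2 / c) * exp (-(c / 2 * y ^ 2)) := by
  have hpoly : 1 + |y| ≤ (2 + 2 / c) * (c / 2 * y ^ 2 + 1) :=
    calc 1 + |y| ≤ 2 + y ^ 2 := by nlinarith [sq_abs y, sq_nonneg (|y| - 1)]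
      _ ≤ 2 + y ^ 2 + (c * y ^ 2 + 2 / c) := le_add_of_nonneg_right (by positivity)
      _ = (2 + 2 / c) * (c / 2 * y ^ 2 + 1) := by field_simp; ring
  calc (1 + |y|) * exp (-(c * y ^ 2))
      ≤ (2 + 2 / c) * exp (c / 2 * y ^ 2) * exp (-(c * y ^ 2)) := by
        gcongr
        exact hpoly.trans (mul_le_mul_of_nonneg_left (add_one_le_exp _) (by positivity))
    _ = (2 + 2 / c) * exp (-(c / 2 * y ^ 2)) := by
        rw [mul_assoc, ← exp_add]
        ring_nf

lemma tendsto_exp_neg_mul_sq_cocompact {c : ℝ} (hc : 0 < c) :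
    Tendsto (fun y : ℝ => exp (-(c * y ^ 2))) (cocompact ℝ) (𝓝 0) := by
  simpa using tendsto_rpow_abs_mul_exp_neg_mul_sq_cocompact hc 0

lemma tendsto_of_abs_sub_rhoHat_le {f : ℝ → ℝ} {m p C c : ℝ} (hc : 0 < c)
    (h : ∀ y, |f y - rhoHat m p y| ≤ C * exp (-(c * y ^ 2))) :
    Tendsto f atTop (𝓝 p) ∧ Tendsto f atBot (𝓝 m) := by
  have hlim : Tendsto (fun y => f y - rhoHat m p y) (cocompact ℝ) (𝓝 0) :=
    squeeze_zero_norm h (by simpa using (tendsto_exp_neg_mul_sq_cocompact hc).const_mul C)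
  constructor
  · refine tendsto_sub_nhds_zero_iff.1 ((hlim.mono_left atTop_le_cocompact).congr' ?_)
    filter_upwards [eventually_ge_atTop 0] with y hy
    rw [rhoHat, if_neg hy.not_gt]
  · refine tendsto_sub_nhds_zero_iff.1 ((hlim.mono_left atBot_le_cocompact).congr' ?_)
    filter_upwards [eventually_lt_atBot 0] with y hy
    rw [rhoHat, if_pos hy]

/-- `X` is a solution of the profile equation `(b(X) X')' = -(y / 2) X'`, normalized to take
values in `(0, 1)`, and `F` is its flux `b(X) X'`. The lower bound on the flux forces `X` to
approach `0` and `1` at least as fast as the flux decays. -/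
structure IsNormalizedProfile (b X F : ℝ → ℝ) : Prop where
  mem_Ioo : ∀ y, X y ∈ Ioo (0 : ℝ) 1
  hasDerivAt : ∀ y, HasDerivAt X (F y / b (X y)) y
  hasDerivAt_flux : ∀ y, HasDerivAt F (-(y / 2) * (F y / b (X y))) y
  exists_mul_le : ∃ κ > 0, ∀ y, κ * (X y * (1 - X y)) ≤ F y

lemma exists_isNormalizedProfile {b : ℝ → ℝ} (hb : ContinuousOn b (Icc 0 1))
    (hb₀ : ∀ x ∈ Icc (0 : ℝ) 1, 0 < b x) : ∃ X F, IsNormalizedProfile b X F := by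
  have ha : ContinuousOn (fun x => b x / 2) (Icc 0 1) := hb.div_const 2
  have ha₀ : ∀ x ∈ Icc (0 : ℝ) 1, 0 < b x / 2 := fun x hx => half_pos (hb₀ x hx)
  obtain ⟨q, hq⟩ := exists_isSingularDirichletSolution_zero ha ha₀
  set q' := dirichletSlope fun x => b x / 2 / q x
  have hY : ∀ x ∈ Ioo (0 : ℝ) 1, HasDerivAt (fun x => -2 * q' x) (b x / q x) x := fun x hx =>
    ((hq.hasDerivAt_slope ha hx).const_mul (-2)).congr_deriv (by ring)
  obtain ⟨X, hX⟩ := exists_rightInverse_hasDerivAt ordConnected_Ioo hY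
    (fun x hx => div_pos (hb₀ x (Ioo_subset_Icc_self hx)) (hq.pos hx))
    (fun y => (hq.exists_lt_slope ha ha₀ (-y / 2)).imp fun x hx => ⟨hx.1, by linarith [hx.2]⟩)
    (fun y => (hq.exists_slope_lt ha ha₀ (-y / 2)).imp fun x hx => ⟨hx.1, by linarith [hx.2]⟩)
  choose hmem hinv hder using hX
  simp only [inv_div] at hder
  obtain ⟨κ, hκ, hlow⟩ := hq.exists_mul_le
  refine ⟨X, q ∘ X, hmem, hder, fun y => ?_, κ, hκ, fun y => hlow _ (Ioo_subset_Icc_self (hmem y))⟩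
  refine ((hq.hasDerivAt ha (hmem y)).comp y (hder y)).congr_deriv ?_
  rw [show -(y / 2) = q' (X y) by linarith [hinv y], Function.comp_apply]

namespace IsNormalizedProfile

variable {b X F : ℝ → ℝ} {y : ℝ}

lemma mem_Icc (h : IsNormalizedProfile b X F) (y : ℝ) : X y ∈ Icc (0 : ℝ) 1 :=
  Ioo_subset_Icc_self (h.mem_Ioo y)

lemma flux_pos (h : IsNormalizedProfile b X F) (y : ℝ) : 0 < F y := by
  obtain ⟨κ, hκ, hlow⟩ := h.exists_mul_le
  exact (mul_pos hκ (mul_one_sub_pos (h.mem_Ioo y))).trans_le (hlow y)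

lemma monotone (h : IsNormalizedProfile b X F) (hb₀ : ∀ x ∈ Icc (0 : ℝ) 1, 0 < b x) :
    Monotone X :=
  monotone_of_hasDerivAt_nonneg h.hasDerivAt fun y =>
    (div_pos (h.flux_pos y) (hb₀ _ (h.mem_Icc y))).le

lemma contDiff (h : IsNormalizedProfile b X F) (hb : ∀ x ∈ Icc (0 : ℝ) 1, ContDiffAt ℝ ∞ b x)
    (hb₀ : ∀ x ∈ Icc (0 : ℝ) 1, 0 < b x) : ContDiff ℝ ∞ X := by
  have hX' : deriv X = fun y => F y / b (X y) := funext fun y => (h.hasDerivAt y).deriv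
  have hF' : deriv F = fun y => -(y / 2) * (F y / b (X y)) :=
    funext fun y => (h.hasDerivAt_flux y).deriv
  suffices hn : ∀ n : ℕ, ContDiff ℝ n X ∧ ContDiff ℝ n F from contDiff_infty.2 fun n => (hn n).1
  intro n
  induction n with
  | zero =>
    simp only [CharP.cast_eq_zero, contDiff_zero, continuous_iff_continuousAt]
    exact ⟨fun y => (h.hasDerivAt y).continuousAt, fun y => (h.hasDerivAt_flux y).continuousAt⟩
  | succ n ih =>
    have hbX : ContDiff ℝ n fun y => b (X y) := contDiff_iff_contDiffAt.2 fun y =>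
      ((hb _ (h.mem_Icc y)).of_le (mod_cast le_top)).comp y ih.1.contDiffAt
    have hquot : ContDiff ℝ n fun y => F y / b (X y) :=
      ih.2.div hbX fun y => (hb₀ _ (h.mem_Icc y)).ne'
    rw [Nat.cast_succ, contDiff_succ_iff_deriv, contDiff_succ_iff_deriv, hX', hF']
    exact ⟨⟨fun y => (h.hasDerivAt y).differentiableAt, by simp, hquot⟩,
      fun y => (h.hasDerivAt_flux y).differentiableAt, by simp, by fun_prop⟩

lemma flux_le_mul_exp_neg_sq {c : ℝ} (h : IsNormalizedProfile b X F)
    (hc : ∀ x ∈ Icc (0 : ℝ) 1, 4 * c ≤ 1 / b x) (y : ℝ) : F y ≤ F 0 * exp (-(c * y ^ 2)) :=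
  le_mul_exp_neg_sq_of_hasDerivAt (g := fun y => 1 / b (X y) / 2) (fun y => (h.flux_pos y).le)
    (fun y => (h.hasDerivAt_flux y).congr_deriv (by ring))
    (fun y => by linarith [hc _ (h.mem_Icc y)]) y

lemma flux_le (h : IsNormalizedProfile b X F) (hb₀ : ∀ x ∈ Icc (0 : ℝ) 1, 0 < b x) (y : ℝ) :
    F y ≤ F 0 := by
  simpa using h.flux_le_mul_exp_neg_sq (c := 0)
    (fun x hx => by simpa using (hb₀ x hx).le) y

lemma exists_abs_sub_rhoHat_le (h : IsNormalizedProfile b X F)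
    (hb₀ : ∀ x ∈ Icc (0 : ℝ) 1, 0 < b x) : ∃ C > 0, ∀ y, |X y - rhoHat 0 1 y| ≤ C * F y := by
  obtain ⟨κ, hκ, hlow⟩ := h.exists_mul_le
  have hX₀ : 0 < X 0 := (h.mem_Ioo 0).1
  have hX₁ : 0 < 1 - X 0 := sub_pos.2 (h.mem_Ioo 0).2
  set m := min (X 0) (1 - X 0)
  have : 0 < m := lt_min hX₀ hX₁
  refine ⟨1 / (κ * m), by positivity, fun y => ?_⟩
  have hX : 0 < X y := (h.mem_Ioo y).1
  have hX' : 0 < 1 - X y := sub_pos.2 (h.mem_Ioo y).2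
  rw [one_div_mul_eq_div, le_div_iff₀ (by positivity)]
  refine le_trans ?_ (hlow y)
  rw [rhoHat]
  split_ifs with hy
  · have hmy : m ≤ 1 - X y := (min_le_right _ _).trans (by linarith [h.monotone hb₀ hy.le])
    rw [sub_zero, abs_of_pos hX]
    calc X y * (κ * m) = κ * (X y * m) := by ring
      _ ≤ κ * (X y * (1 - X y)) := by gcongr
  · have hmy : m ≤ X y := (min_le_left _ _).trans (h.monotone hb₀ (not_lt.1 hy))
    rw [abs_sub_comm, abs_of_pos hX']
    calc (1 - X y) * (κ * m) = κ * (m * (1 - X y)) := by ring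
      _ ≤ κ * (X y * (1 - X y)) := by gcongr

lemma exists_abs_deriv_le (h : IsNormalizedProfile b X F) (hb : ContinuousOn b (Icc 0 1))
    (hb₀ : ∀ x ∈ Icc (0 : ℝ) 1, 0 < b x) : ∃ C > 0, ∀ y, |deriv X y| ≤ C * F y := by
  obtain ⟨z, hz, hmin⟩ := isCompact_Icc.exists_isMinOn ⟨0, by simp⟩ hb
  have hbz := hb₀ z hz
  refine ⟨1 / b z, by positivity, fun y => ?_⟩
  have hF := h.flux_pos y
  rw [(h.hasDerivAt y).deriv, abs_of_pos (div_pos hF (hb₀ _ (h.mem_Icc y))),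
    one_div_mul_eq_div]
  exact div_le_div_of_nonneg_left hF.le hbz (hmin (h.mem_Icc y))

lemma deriv_deriv (h : IsNormalizedProfile b X F) (hb : DifferentiableAt ℝ b (X y))
    (hbX : b (X y) ≠ 0) :
    deriv (deriv X) y = -(y / 2 + deriv b (X y) * deriv X y) / b (X y) * deriv X y := by
  have hX' : deriv X = fun y => F y / b (X y) := funext fun y => (h.hasDerivAt y).deriv
  have hd := (h.hasDerivAt_flux y).div (hb.hasDerivAt.comp y (h.hasDerivAt y)) hbX
  rw [hX']
  refine hd.deriv.trans ?_
  simp only [Function.comp_apply]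
  field_simp
  ring

lemma exists_abs_half_add_le (h : IsNormalizedProfile b X F)
    (hb : ∀ x ∈ Icc (0 : ℝ) 1, ContDiffAt ℝ 1 b x) (hb₀ : ∀ x ∈ Icc (0 : ℝ) 1, 0 < b x) :
    ∃ C > 0, ∀ y, |y / 2 + deriv b (X y) * deriv X y| ≤ C * (1 + |y|) := by
  have hb'c : ContinuousOn (deriv b) (Icc 0 1) := fun x hx =>
    ((hb x hx).derivWithin (m := 0) le_rfl).continuousAt.continuousWithinAt
  obtain ⟨B, hB⟩ := isCompact_Icc.exists_bound_of_continuousOn hb'c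
  obtain ⟨C, hC, hX'⟩ :=
    h.exists_abs_deriv_le (fun x hx => (hb x hx).continuousAt.continuousWithinAt) hb₀
  have hF₀ := h.flux_pos 0
  have hB₀ : 0 ≤ B := (norm_nonneg _).trans (hB 0 (by simp))
  refine ⟨1 + B * (C * F 0), by positivity, fun y => ?_⟩
  calc |y / 2 + deriv b (X y) * deriv X y| ≤ |y / 2| + |deriv b (X y)| * |deriv X y| :=
        (abs_add_le _ _).trans_eq (by rw [abs_mul])
    _ ≤ |y| / 2 + B * (C * F 0) := by
        rw [abs_div, abs_two]
        gcongr
        · exact hB _ (h.mem_Icc y)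
        · exact (hX' y).trans (mul_le_mul_of_nonneg_left (h.flux_le hb₀ y) hC.le)
    _ ≤ (1 + B * (C * F 0)) * (1 + |y|) := by
        nlinarith [abs_nonneg y, (by positivity : 0 ≤ B * (C * F 0) * |y|)]

lemma exists_abs_deriv_deriv_le (h : IsNormalizedProfile b X F)
    (hb : ∀ x ∈ Icc (0 : ℝ) 1, ContDiffAt ℝ 1 b x) (hb₀ : ∀ x ∈ Icc (0 : ℝ) 1, 0 < b x) :
    ∃ C > 0, ∀ y, |deriv (deriv X) y| ≤ C * ((1 + |y|) * F y) := by
  have hbc : ContinuousOn b (Icc 0 1) := fun x hx => (hb x hx).continuousAt.continuousWithinAt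
  obtain ⟨z, hz, hmin⟩ := isCompact_Icc.exists_isMinOn ⟨0, by simp⟩ hbc
  obtain ⟨C, hC, hX'⟩ := h.exists_abs_deriv_le hbc hb₀
  obtain ⟨K, hK, hcoeff⟩ := h.exists_abs_half_add_le hb hb₀
  have hbz := hb₀ z hz
  refine ⟨K / b z * C, by positivity, fun y => ?_⟩
  have hbX := hb₀ _ (h.mem_Icc y)
  rw [h.deriv_deriv ((hb _ (h.mem_Icc y)).differentiableAt one_ne_zero) hbX.ne', abs_mul, abs_div,
    abs_neg, abs_of_pos hbX]
  calc |y / 2 + deriv b (X y) * deriv X y| / b (X y) * |deriv X y|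
      ≤ K * (1 + |y|) / b z * (C * F y) := by
        gcongr
        · exact hcoeff y
        · exact hmin (h.mem_Icc y)
        · exact hX' y
    _ = K / b z * C * ((1 + |y|) * F y) := by ring

lemma exists_one_add_abs_mul_flux_le (h : IsNormalizedProfile b X F)
    (hb : ContinuousOn b (Icc 0 1)) (hb₀ : ∀ x ∈ Icc (0 : ℝ) 1, 0 < b x) :
    ∃ C > 0, ∃ c > 0, ∀ y, (1 + |y|) * F y ≤ C * exp (-(c * y ^ 2)) := by
  obtain ⟨z, hz, hmax⟩ := isCompact_Icc.exists_isMaxOn ⟨0, by simp⟩ hb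
  have hbz := hb₀ z hz
  have hF₀ := h.flux_pos 0
  set c := 1 / b z / 4
  have hc : 0 < c := by positivity
  have hdecay := h.flux_le_mul_exp_neg_sq (c := c) fun x hx => by
    rw [mul_div_cancel₀ _ four_ne_zero]
    exact one_div_le_one_div_of_le (hb₀ x hx) (hmax hx)
  refine ⟨F 0 * (2 + 2 / c), by positivity, c / 2, by positivity, fun y => ?_⟩
  calc (1 + |y|) * F y ≤ (1 + |y|) * (F 0 * exp (-(c * y ^ 2))) := by gcongr; exact hdecay y
    _ = F 0 * ((1 + |y|) * exp (-(c * y ^ 2))) := by ring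
    _ ≤ F 0 * ((2 + 2 / c) * exp (-(c / 2 * y ^ 2))) :=
        mul_le_mul_of_nonneg_left (one_add_abs_mul_exp_neg_sq_le hc y) hF₀.le
    _ = F 0 * (2 + 2 / c) * exp (-(c / 2 * y ^ 2)) := by ring

lemma exists_gaussian_bound (h : IsNormalizedProfile b X F)
    (hb : ∀ x ∈ Icc (0 : ℝ) 1, ContDiffAt ℝ 1 b x) (hb₀ : ∀ x ∈ Icc (0 : ℝ) 1, 0 < b x) :
    ∃ C > 0, ∃ c > 0, ∀ y, |X y - rhoHat 0 1 y| + |deriv X y| + |deriv (deriv X) y| ≤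
      C * exp (-(c * y ^ 2)) := by
  have hbc : ContinuousOn b (Icc 0 1) := fun x hx => (hb x hx).continuousAt.continuousWithinAt
  obtain ⟨C₀, hC₀, h₀⟩ := h.exists_abs_sub_rhoHat_le hb₀
  obtain ⟨C₁, hC₁, h₁⟩ := h.exists_abs_deriv_le hbc hb₀
  obtain ⟨C₂, hC₂, h₂⟩ := h.exists_abs_deriv_deriv_le hb hb₀
  obtain ⟨K, hK, c, hc, hF⟩ := h.exists_one_add_abs_mul_flux_le hbc hb₀
  refine ⟨(C₀ + C₁ + C₂) * K, by positivity, c, hc, fun y => ?_⟩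
  have hle : F y ≤ (1 + |y|) * F y :=
    le_mul_of_one_le_left (h.flux_pos y).le (le_add_of_nonneg_right (abs_nonneg y))
  calc |X y - rhoHat 0 1 y| + |deriv X y| + |deriv (deriv X) y|
      ≤ C₀ * ((1 + |y|) * F y) + C₁ * ((1 + |y|) * F y) + C₂ * ((1 + |y|) * F y) :=
        add_le_add (add_le_add ((h₀ y).trans (mul_le_mul_of_nonneg_left hle hC₀.le))
          ((h₁ y).trans (mul_le_mul_of_nonneg_left hle hC₁.le))) (h₂ y)
    _ = (C₀ + C₁ + C₂) * ((1 + |y|) * F y) := by ring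
    _ ≤ (C₀ + C₁ + C₂) * (K * exp (-(c * y ^ 2))) :=
        mul_le_mul_of_nonneg_left (hF y) (by positivity)
    _ = (C₀ + C₁ + C₂) * K * exp (-(c * y ^ 2)) := by ring

end IsNormalizedProfile

/-! ### The profile with prescribed limits -/

/-- The diffusivity `p' / α` in the coordinate `x` that parametrizes the densities from `ρm` to
`ρp` affinely by `[0, 1]`. -/
def normalizedDiffusivity (p : ℝ → ℝ) (α ρm ρp x : ℝ) : ℝ :=
  deriv p (ρm + (ρp - ρm) * x) / α

section NormalizedDiffusivity

variable {p : ℝ → ℝ} {α ρm ρp : ℝ}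

lemma add_sub_mul_mem_uIcc {x : ℝ} (hx : x ∈ Icc (0 : ℝ) 1) :
    ρm + (ρp - ρm) * x ∈ uIcc ρm ρp := by
  rw [← segment_eq_uIcc, segment_eq_image', mul_comm]
  exact mem_image_of_mem _ hx

lemma normalizedDiffusivity_pos (hα : 0 < α) (hp' : ∀ ρ ∈ uIcc ρm ρp, 0 < deriv p ρ) :
    ∀ x ∈ Icc (0 : ℝ) 1, 0 < normalizedDiffusivity p α ρm ρp x := fun _ hx =>
  div_pos (hp' _ (add_sub_mul_mem_uIcc hx)) hα

lemma contDiffAt_normalizedDiffusivity (hp : ∀ ρ ∈ uIcc ρm ρp, ContDiffAt ℝ ∞ p ρ) :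
    ∀ x ∈ Icc (0 : ℝ) 1, ContDiffAt ℝ ∞ (normalizedDiffusivity p α ρm ρp) x := fun x hx =>
  (((hp _ (add_sub_mul_mem_uIcc hx)).derivWithin (m := ∞) le_rfl).comp x
    (f := fun x => ρm + (ρp - ρm) * x) (by fun_prop)).div_const α

lemma rhoHat_eq_add_mul (ρm ρp y : ℝ) : rhoHat ρm ρp y = ρm + (ρp - ρm) * rhoHat 0 1 y := by
  unfold rhoHat
  split_ifs <;> ring

end NormalizedDiffusivity

namespace IsNormalizedProfile

variable {p X F : ℝ → ℝ} {α ρm ρp : ℝ}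

lemma deriv_comp (h : IsNormalizedProfile (normalizedDiffusivity p α ρm ρp) X F) (hα : α ≠ 0)
    (hp : ∀ ρ ∈ uIcc ρm ρp, DifferentiableAt ℝ p ρ) (hp' : ∀ ρ ∈ uIcc ρm ρp, deriv p ρ ≠ 0) :
    deriv (fun z => p (ρm + (ρp - ρm) * X z)) = fun y => α * (ρp - ρm) * F y := by
  ext y
  have hmem := add_sub_mul_mem_uIcc (ρm := ρm) (ρp := ρp) (h.mem_Icc y)
  refine ((hp _ hmem).hasDerivAt.comp y
    (((h.hasDerivAt y).const_mul (ρp - ρm)).const_add ρm)).deriv.trans ?_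
  have hne := hp' _ hmem
  rw [normalizedDiffusivity]
  field_simp

lemma profile_equation (h : IsNormalizedProfile (normalizedDiffusivity p α ρm ρp) X F)
    (hα : α ≠ 0) (hp : ∀ ρ ∈ uIcc ρm ρp, DifferentiableAt ℝ p ρ)
    (hp' : ∀ ρ ∈ uIcc ρm ρp, deriv p ρ ≠ 0) (y : ℝ) :
    0 = (1 / α) * deriv (deriv fun z => p (ρm + (ρp - ρm) * X z)) y +
      y / 2 * deriv (fun z => ρm + (ρp - ρm) * X z) y := by
  rw [h.deriv_comp hα hp hp', ((h.hasDerivAt_flux y).const_mul _).deriv,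
    (((h.hasDerivAt y).const_mul (ρp - ρm)).const_add ρm).deriv]
  field_simp
  ring

end IsNormalizedProfile

lemma monotone_or_antitone_add_mul {X : ℝ → ℝ} (hX : Monotone X) (r L : ℝ) :
    (Monotone fun y => r + L * X y) ∨ Antitone fun y => r + L * X y := by
  rcases le_total 0 L with hL | hL
  · exact .inl ((hX.const_mul hL).const_add r)
  · exact .inr ((hX.const_mul_of_nonpos hL).const_add r)

lemma sum_abs_add_mul_le {X : ℝ → ℝ} {K y : ℝ} (ρm ρp : ℝ)
    (h : |X y - rhoHat 0 1 y| + |deriv X y| + |deriv (deriv X) y| ≤ K) :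
    |ρm + (ρp - ρm) * X y - rhoHat ρm ρp y| + |deriv (fun z => ρm + (ρp - ρm) * X z) y| +
      |deriv (deriv fun z => ρm + (ρp - ρm) * X z) y| ≤ |ρp - ρm| * K := by
  rw [rhoHat_eq_add_mul ρm ρp]
  simp only [deriv_const_add', deriv_const_mul_field', add_sub_add_left_eq_sub, ← mul_sub, abs_mul,
    ← mul_add]
  exact mul_le_mul_of_nonneg_left h (abs_nonneg _)

theorem porous_medium_profile_exists_general (p : ℝ → ℝ) (α ρm ρp : ℝ) (hα : 0 < α)
    (hp : ∀ ρ ∈ uIcc ρm ρp, ContDiffAt ℝ ∞ p ρ) (hp' : ∀ ρ ∈ uIcc ρm ρp, 0 < deriv p ρ) :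
    ∃ ρs : ℝ → ℝ, ContDiff ℝ ∞ ρs ∧
      (∀ y : ℝ, 0 = (1 / α) * deriv (deriv (fun z => p (ρs z))) y + y / 2 * deriv ρs y) ∧
      Tendsto ρs atTop (𝓝 ρp) ∧ Tendsto ρs atBot (𝓝 ρm) ∧
      (Monotone ρs ∨ Antitone ρs) ∧
      (∃ C > (0 : ℝ), ∃ c > (0 : ℝ), ∀ y : ℝ,
        |ρs y - rhoHat ρm ρp y| + |deriv ρs y| + |deriv (deriv ρs) y|
          ≤ C * |ρp - ρm| * exp (-(c * α * y ^ 2))) ∧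
      ∀ y : ℝ, min ρm ρp ≤ ρs y ∧ ρs y ≤ max ρm ρp := by
  have hb := contDiffAt_normalizedDiffusivity (α := α) hp
  have hb₀ := normalizedDiffusivity_pos hα hp'
  obtain ⟨X, F, h⟩ := exists_isNormalizedProfile
    (fun x hx => (hb x hx).continuousAt.continuousWithinAt) hb₀
  obtain ⟨C, hC, c, hc, hX⟩ := h.exists_gaussian_bound
    (fun x hx => (hb x hx).of_le (mod_cast le_top)) hb₀
  have hdecay := fun y => sum_abs_add_mul_le ρm ρp (hX y)
  have hlim := tendsto_of_abs_sub_rhoHat_le (f := fun y => ρm + (ρp - ρm) * X y)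
    (C := |ρp - ρm| * C) hc fun y => by
      have := hdecay y
      have := abs_nonneg (deriv (fun z => ρm + (ρp - ρm) * X z) y)
      have := abs_nonneg (deriv (deriv fun z => ρm + (ρp - ρm) * X z) y)
      linarith
  refine ⟨fun y => ρm + (ρp - ρm) * X y, ?_, ?_, hlim.1, hlim.2, ?_, ?_, ?_⟩
  · exact contDiff_const.add (contDiff_const.mul (h.contDiff hb hb₀))
  · exact h.profile_equation hα.ne' (fun ρ hρ => (hp ρ hρ).differentiableAt (by simp))
      fun ρ hρ => (hp' ρ hρ).ne'
  · exact monotone_or_antitone_add_mul (h.monotone hb₀) _ _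
  · refine ⟨C, hC, c / α, by positivity, fun y => ?_⟩
    rw [div_mul_cancel₀ c hα.ne', mul_comm C, mul_assoc]
    exact hdecay y
  · exact fun y => add_sub_mul_mem_uIcc (h.mem_Icc y)

lemma contDiffAt_const_mul_rpow (k γ : ℝ) {ρ : ℝ} (hρ : ρ ≠ 0) :
    ContDiffAt ℝ ∞ (fun ρ : ℝ => k * ρ ^ γ) ρ :=
  contDiffAt_const.mul (contDiffAt_id.rpow_const_of_ne hρ)

lemma deriv_const_mul_rpow_pos {k γ ρ : ℝ} (hk : 0 < k) (hγ : 0 < γ) (hρ : 0 < ρ) :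
    0 < deriv (fun ρ : ℝ => k * ρ ^ γ) ρ := by
  rw [((hasDerivAt_rpow_const (Or.inl hρ.ne')).const_mul k).deriv]
  positivity

/-- **Existence and decay of the similarity profile for the porous medium equation.**
For the γ-law pressure `p(ρ) = k ρ^γ` (`k > 0`, `γ ≥ 1`) and `α > 0`, for all `ρ₋, ρ₊ > 0`
there is a smooth monotone profile `ρ*` solving `0 = (1/α) (p(ρ*))'' + (y/2) (ρ*)'`
with limits `ρ±` at `±∞`, Gaussian decay of `ρ* − ρ̂`, `(ρ*)'`, `(ρ*)''`, and
`min{ρ₋,ρ₊} ≤ ρ* ≤ max{ρ₋,ρ₊}`. -/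
theorem porous_medium_profile_exists
    (k γ α ρm ρp : ℝ) (hk : 0 < k) (hγ : 1 ≤ γ) (hα : 0 < α)
    (hρm : 0 < ρm) (hρp : 0 < ρp) :
    ∃ ρs : ℝ → ℝ, ContDiff ℝ (⊤ : ℕ∞) ρs ∧
      (∀ y : ℝ, 0 = (1/α) * deriv (deriv (fun z => k * ρs z ^ γ)) y + y / 2 * deriv ρs y) ∧
      Tendsto ρs atTop (nhds ρp) ∧ Tendsto ρs atBot (nhds ρm) ∧
      (Monotone ρs ∨ Antitone ρs) ∧
      (∃ C > (0:ℝ), ∃ c > (0:ℝ), ∀ y : ℝ,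
        |ρs y - rhoHat ρm ρp y| + |deriv ρs y| + |deriv (deriv ρs) y|
          ≤ C * |ρp - ρm| * Real.exp (-(c * α * y ^ 2))) ∧
      (∀ y : ℝ, min ρm ρp ≤ ρs y ∧ ρs y ≤ max ρm ρp) :=
  have hpos : ∀ ρ ∈ uIcc ρm ρp, 0 < ρ := fun _ hρ => (lt_min hρm hρp).trans_le hρ.1
  porous_medium_profile_exists_general (fun ρ => k * ρ ^ γ) α ρm ρp hα
    (fun ρ hρ => contDiffAt_const_mul_rpow k γ (hpos ρ hρ).ne')
    fun ρ hρ => deriv_const_mul_rpow_pos hk (zero_lt_one.trans_le hγ) (hpos ρ hρ)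
end
end

section
/- Properties of the energy potential under the improved pressure condition: Let p ∈ C([0,∞)) ∩ C¹((0,∞)) with p′ > 0 on (0,∞), and suppose there exists c > 0 with p′(z) ≤ c p(z)/z for all z > 0 and ∫₀¹ p(z)/z² dz < ∞. Define h(ρ) = ρ ∫₀^ρ p(z)/z² dz for ρ ≥ 0. Then h ∈ C¹([0,∞)) with h(0) = 0 and h′(0) = 0, h satisfies p(z) = z h′(z) − h(z) and h″(z) = p′(z)/z on (0,∞), and ρ h′(ρ) ≤ c h(ρ|0) for all ρ ≥ 0, where h(ρ|0) = h(ρ) − h(0) − h′(0)ρ = h(ρ). -/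
noncomputable section
open MeasureTheory Real Set Filter

/-!
Write `e(ρ) = ∫₀^ρ p(z)/z² dz`, so that `h(ρ) = ρ e(ρ)` and `h′(ρ) = e(ρ) + p(ρ)/ρ` for `ρ > 0`.
Everything rests on `p(z)/z → 0` as `z → 0⁺`. The condition `p′ ≤ c p/z` says exactly that
`c e − h′ = (c − 1) e − p/z` has nonnegative derivative. Since `p(z)/z²` is integrable at `0` and
`1/z` is not, `p(z)/z` cannot stay away from `0`; as `e → 0`, the monotone function `c e − h′` thus
has `0` as a cluster value at `0⁺`, hence as its limit. So `p(z)/z → 0`, and `c e − h′ ≥ 0` by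
monotonicity.
-/

open scoped Topology

section Calculus

lemma mapClusterPt_add_of_tendsto {α M : Type*} [TopologicalSpace M] [Add M] [ContinuousAdd M]
    {l : Filter α} {f g : α → M} {x y : M} (hf : Tendsto f l (𝓝 x)) (hg : MapClusterPt y l g) :
    MapClusterPt (x + y) l (fun t => f t + g t) := by
  obtain ⟨U, hUl, hgU⟩ := mapClusterPt_iff_ultrafilter.1 hg
  exact mapClusterPt_iff_ultrafilter.2 ⟨U, hUl, (hf.mono_left hUl).add hgU⟩

lemma tendsto_nhdsGT_of_monotoneOn_of_mapClusterPt {α β : Type*}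
    [LinearOrder α] [TopologicalSpace α] [ClosedIciTopology α]
    [LinearOrder β] [TopologicalSpace β] [OrderTopology β]
    {f : α → β} {a : α} {L : β} (hf : MonotoneOn f (Ioi a)) (hL : MapClusterPt L (𝓝[>] a) f) :
    Tendsto f (𝓝[>] a) (𝓝 L) := by
  refine tendsto_order.2 ⟨fun y hy => ?_, fun y hy => ?_⟩
  · filter_upwards [self_mem_nhdsWithin] with x hx
    obtain ⟨w, hyw, haw, hwx⟩ :=
      ((hL.frequently (eventually_gt_nhds hy)).and_eventually (Ioo_mem_nhdsGT hx)).exists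
    exact hyw.trans_le (hf haw hx hwx.le)
  · obtain ⟨w, hwy, haw⟩ :=
      ((hL.frequently (eventually_lt_nhds hy)).and_eventually self_mem_nhdsWithin).exists
    filter_upwards [Ioo_mem_nhdsGT haw] with x hx
    exact (hf hx.1 haw hx.2.le).trans_lt hwy

variable {E : Type*} [NormedAddCommGroup E]

lemma intervalIntegrable_of_continuousOn_Ioi {μ : Measure ℝ} [IsLocallyFiniteMeasure μ]
    {f : ℝ → E} {a b x : ℝ} (hf : ContinuousOn f (Ioi a)) (hab : a < b)
    (hfi : IntervalIntegrable f μ a b) (hx : a < x) : IntervalIntegrable f μ a x :=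
  hfi.trans (hf.mono fun _ ht => (lt_min hab hx).trans_le ht.1).intervalIntegrable

variable [NormedSpace ℝ E]

lemma mapClusterPt_zero_of_integrableAtFilter_inv_smul {f : ℝ → E}
    (hf : IntegrableAtFilter (fun z => z⁻¹ • f z) (𝓝[>] 0)) : MapClusterPt 0 (𝓝[>] 0) f := by
  by_contra hcluster
  obtain ⟨ε, hε, hbound⟩ : ∃ ε > 0, ∀ᶠ z in 𝓝[>] 0, ε ≤ ‖f z‖ := by
    simpa [Metric.nhds_basis_ball.mapClusterPt_iff_frequently] using hcluster
  have hlog : deriv log =O[𝓝[>] 0] fun z => z⁻¹ • f z := by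
    refine Asymptotics.IsBigO.of_bound ε⁻¹ (hbound.mono fun z hz => ?_)
    rw [deriv_log, norm_smul, mul_left_comm]
    exact le_mul_of_one_le_right (norm_nonneg _) ((one_le_inv_mul₀ hε).2 hz)
  obtain ⟨s, hs, hfs⟩ := hf
  refine not_integrableOn_of_tendsto_norm_atTop_of_deriv_isBigO_filter (𝓝[>] 0) hs ?_
    (tendsto_abs_atBot_atTop.comp tendsto_log_nhdsGT_zero) hlog hfs
  filter_upwards [self_mem_nhdsWithin] with z hz
  exact differentiableAt_log (ne_of_gt hz)

lemma hasDerivWithinAt_sub_smul {f : ℝ → E} {s : Set ℝ} {a : ℝ} (hf : ContinuousWithinAt f s a) :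
    HasDerivWithinAt (fun x => (x - a) • f x) (f a) s a := by
  rw [hasDerivWithinAt_iff_tendsto_slope]
  refine (hf.mono sdiff_subset).tendsto.congr' ?_
  filter_upwards [self_mem_nhdsWithin] with x hx
  simp [slope, inv_smul_smul₀ (sub_ne_zero.2 hx.2)]

lemma hasDerivAt_integral_of_continuousOn_Ioi [CompleteSpace E] {f : ℝ → E} {a b x : ℝ}
    (hf : ContinuousOn f (Ioi a)) (hab : a < b) (hfi : IntervalIntegrable f volume a b)
    (hx : a < x) : HasDerivAt (fun u => ∫ t in a..u, f t) (f x) x :=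
  intervalIntegral.integral_hasDerivAt_right (intervalIntegrable_of_continuousOn_Ioi hf hab hfi hx)
    (hf.stronglyMeasurableAtFilter isOpen_Ioi x hx) (hf.continuousAt (Ioi_mem_nhds hx))

lemma continuousWithinAt_integral_Ici {μ : Measure ℝ} [NullSingletonClass μ] {f : ℝ → E}
    {a b : ℝ} (hab : a < b) (hfi : IntervalIntegrable f μ a b) :
    ContinuousWithinAt (fun u => ∫ t in a..u, f t ∂μ) (Ici a) a := by
  have hprim := intervalIntegral.continuousOn_primitive_interval' hfi left_mem_uIcc
  rw [uIcc_of_le hab.le] at hprim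
  exact (hprim a (left_mem_Icc.2 hab.le)).mono_of_mem_nhdsWithin (Icc_mem_nhdsGE hab)

end Calculus

/-- The specific internal energy `∫₀^ρ p(z)/z² dz` of a fluid with pressure law `p`; the energy
potential is `ρ` times it. -/
def specificEnergy (p : ℝ → ℝ) (ρ : ℝ) : ℝ := ∫ z in (0 : ℝ)..ρ, p z / z ^ 2

/-- The specific enthalpy, which is the derivative `h′` of the energy potential. At `ρ = 0` the
convention `p 0 / 0 = 0` gives it the value `0`, which is the limit it has under the assumptions
of `continuousOn_enthalpy`. -/
def enthalpy (p : ℝ → ℝ) (ρ : ℝ) : ℝ := specificEnergy p ρ + p ρ / ρ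

section Enthalpy

variable {p : ℝ → ℝ} {c z ρ : ℝ}

@[simp] lemma specificEnergy_zero : specificEnergy p 0 = 0 := by simp [specificEnergy]

@[simp] lemma enthalpy_zero : enthalpy p 0 = 0 := by simp [enthalpy]

lemma continuousWithinAt_specificEnergy_zero
    (hint : IntegrableOn (fun z => p z / z ^ 2) (Ioc 0 1)) :
    ContinuousWithinAt (specificEnergy p) (Ici 0) 0 :=
  continuousWithinAt_integral_Ici one_pos
    ((intervalIntegrable_iff_integrableOn_Ioc_of_le zero_le_one).2 hint)

lemma tendsto_specificEnergy_nhdsGT_zero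
    (hint : IntegrableOn (fun z => p z / z ^ 2) (Ioc 0 1)) :
    Tendsto (specificEnergy p) (𝓝[>] 0) (𝓝 0) := by
  simpa using ((continuousWithinAt_specificEnergy_zero hint).mono Ioi_subset_Ici_self).tendsto

lemma hasDerivAt_specificEnergy (hp : ContinuousOn p (Ioi 0))
    (hint : IntegrableOn (fun z => p z / z ^ 2) (Ioc 0 1)) (hz : 0 < z) :
    HasDerivAt (specificEnergy p) (p z / z ^ 2) z :=
  hasDerivAt_integral_of_continuousOn_Ioi
    (hp.div (by fun_prop) fun _ hx => pow_ne_zero 2 (ne_of_gt hx)) one_pos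
    ((intervalIntegrable_iff_integrableOn_Ioc_of_le zero_le_one).2 hint) hz

lemma hasDerivAt_enthalpy (hp : DifferentiableOn ℝ p (Ioi 0))
    (hint : IntegrableOn (fun z => p z / z ^ 2) (Ioc 0 1)) (hz : 0 < z) :
    HasDerivAt (enthalpy p) (deriv p z / z) z := by
  have hquot : HasDerivAt (fun z => p z / z) ((deriv p z * z - p z * 1) / z ^ 2) z :=
    (hp.differentiableAt (Ioi_mem_nhds hz)).hasDerivAt.div (hasDerivAt_id z) hz.ne'
  refine ((hasDerivAt_specificEnergy hp.continuousOn hint hz).add hquot).congr_deriv ?_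
  field_simp
  ring

lemma monotoneOn_mul_specificEnergy_sub_enthalpy (hp : DifferentiableOn ℝ p (Ioi 0))
    (hpc : ∀ z > 0, deriv p z ≤ c * p z / z)
    (hint : IntegrableOn (fun z => p z / z ^ 2) (Ioc 0 1)) :
    MonotoneOn (fun z => c * specificEnergy p z - enthalpy p z) (Ioi 0) := by
  have hderiv : ∀ z > 0, HasDerivAt (fun z => c * specificEnergy p z - enthalpy p z)
      (c * (p z / z ^ 2) - deriv p z / z) z := fun z hz =>
    ((hasDerivAt_specificEnergy hp.continuousOn hint hz).const_mul c).sub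
      (hasDerivAt_enthalpy hp hint hz)
  refine monotoneOn_of_hasDerivWithinAt_nonneg (convex_Ioi 0)
    (fun z hz => (hderiv z hz).continuousAt.continuousWithinAt)
    (fun z hz => (hderiv z (interior_subset hz)).hasDerivWithinAt) fun z hz => ?_
  have hz : 0 < z := interior_subset hz
  calc 0 ≤ (c * p z / z - deriv p z) / z := div_nonneg (sub_nonneg.2 (hpc z hz)) hz.le
    _ = c * (p z / z ^ 2) - deriv p z / z := by field_simp

lemma mapClusterPt_div_self_nhdsGT_zero
    (hint : IntegrableOn (fun z => p z / z ^ 2) (Ioc 0 1)) :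
    MapClusterPt 0 (𝓝[>] 0) (fun z => p z / z) := by
  refine mapClusterPt_zero_of_integrableAtFilter_inv_smul
    ⟨Ioc 0 1, Ioc_mem_nhdsGT one_pos, hint.congr_fun (fun z _ => ?_) measurableSet_Ioc⟩
  simp only [smul_eq_mul, div_eq_mul_inv, sq, mul_inv]
  ring

lemma tendsto_mul_specificEnergy_sub_enthalpy (hp : DifferentiableOn ℝ p (Ioi 0))
    (hpc : ∀ z > 0, deriv p z ≤ c * p z / z)
    (hint : IntegrableOn (fun z => p z / z ^ 2) (Ioc 0 1)) :
    Tendsto (fun z => c * specificEnergy p z - enthalpy p z) (𝓝[>] 0) (𝓝 0) := by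
  refine tendsto_nhdsGT_of_monotoneOn_of_mapClusterPt
    (monotoneOn_mul_specificEnergy_sub_enthalpy hp hpc hint) ?_
  have henergy := (tendsto_specificEnergy_nhdsGT_zero hint).const_mul (c - 1)
  have hquot : MapClusterPt (-0) (𝓝[>] 0) (fun z => -(p z / z)) :=
    (mapClusterPt_div_self_nhdsGT_zero hint).continuousAt_comp continuous_neg.continuousAt
  convert mapClusterPt_add_of_tendsto henergy hquot using 1
  · simp
  · ext z
    simp only [enthalpy]
    ring

lemma enthalpy_le_mul_specificEnergy (hp : DifferentiableOn ℝ p (Ioi 0))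
    (hpc : ∀ z > 0, deriv p z ≤ c * p z / z)
    (hint : IntegrableOn (fun z => p z / z ^ 2) (Ioc 0 1)) (hρ : 0 ≤ ρ) :
    enthalpy p ρ ≤ c * specificEnergy p ρ := by
  obtain rfl | hρ := hρ.eq_or_lt
  · simp
  refine sub_nonneg.1 (le_of_tendsto (tendsto_mul_specificEnergy_sub_enthalpy hp hpc hint) ?_)
  filter_upwards [Ioo_mem_nhdsGT hρ] with z hz
  exact monotoneOn_mul_specificEnergy_sub_enthalpy hp hpc hint hz.1 hρ hz.2.le

lemma continuousOn_enthalpy (hp : DifferentiableOn ℝ p (Ioi 0))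
    (hpc : ∀ z > 0, deriv p z ≤ c * p z / z)
    (hint : IntegrableOn (fun z => p z / z ^ 2) (Ioc 0 1)) :
    ContinuousOn (enthalpy p) (Ici 0) := by
  intro ρ hρ
  obtain rfl | hρ := (mem_Ici.1 hρ).eq_or_lt
  · refine continuousWithinAt_Ioi_iff_Ici.1 ?_
    simpa [ContinuousWithinAt] using ((tendsto_specificEnergy_nhdsGT_zero hint).const_mul c).sub
      (tendsto_mul_specificEnergy_sub_enthalpy hp hpc hint)
  · exact (hasDerivAt_enthalpy hp hint hρ).continuousAt.continuousWithinAt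

lemma hasDerivWithinAt_mul_specificEnergy (hp : ContinuousOn p (Ioi 0))
    (hint : IntegrableOn (fun z => p z / z ^ 2) (Ioc 0 1)) (hρ : 0 ≤ ρ) :
    HasDerivWithinAt (fun ρ => ρ * specificEnergy p ρ) (enthalpy p ρ) (Ici 0) ρ := by
  obtain rfl | hρ := hρ.eq_or_lt
  · simpa using hasDerivWithinAt_sub_smul (continuousWithinAt_specificEnergy_zero hint)
  · have hprod := (hasDerivAt_id ρ).mul (hasDerivAt_specificEnergy hp hint hρ)
    refine (hprod.congr_deriv ?_).hasDerivWithinAt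
    simp only [id, enthalpy]
    field_simp

end Enthalpy

theorem energy_potential_pres_better_general
    (p : ℝ → ℝ) (c : ℝ)
    (hp_diff : ∀ z > (0 : ℝ), DifferentiableAt ℝ p z)
    (hpc : ∀ z > (0 : ℝ), deriv p z ≤ c * p z / z)
    (hint : IntegrableOn (fun z => p z / z ^ 2) (Ioc 0 1))
    (h : ℝ → ℝ) (hdef : ∀ ρ : ℝ, h ρ = ρ * ∫ z in (0 : ℝ)..ρ, p z / z ^ 2) :
    ∃ h' : ℝ → ℝ,
      ContinuousOn h' (Ici 0) ∧
      (∀ ρ ∈ Ici (0 : ℝ), HasDerivWithinAt h (h' ρ) (Ici 0) ρ) ∧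
      h 0 = 0 ∧ h' 0 = 0 ∧
      (∀ z > (0 : ℝ), p z = z * h' z - h z) ∧
      (∀ z > (0 : ℝ), HasDerivAt h' (deriv p z / z) z) ∧
      (∀ ρ ≥ (0 : ℝ), ρ * h' ρ ≤ c * h ρ) := by
  obtain rfl : h = fun ρ => ρ * specificEnergy p ρ := funext hdef
  have hp : DifferentiableOn ℝ p (Ioi 0) := fun z hz => (hp_diff z hz).differentiableWithinAt
  refine ⟨enthalpy p, continuousOn_enthalpy hp hpc hint,
    fun ρ hρ => hasDerivWithinAt_mul_specificEnergy hp.continuousOn hint hρ,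
    zero_mul _, enthalpy_zero, fun z hz => ?_, fun z hz => hasDerivAt_enthalpy hp hint hz,
    fun ρ hρ => ?_⟩
  · rw [enthalpy, mul_add, mul_div_cancel₀ _ hz.ne', add_sub_cancel_left]
  · calc ρ * enthalpy p ρ ≤ ρ * (c * specificEnergy p ρ) :=
        mul_le_mul_of_nonneg_left (enthalpy_le_mul_specificEnergy hp hpc hint hρ) hρ
      _ = c * (ρ * specificEnergy p ρ) := mul_left_comm _ _ _

/-- **Properties of the energy potential under the improved pressure condition.**
With `h(ρ) = ρ ∫₀^ρ p(z)/z² dz`, the potential `h` is `C¹` on `[0,∞)` with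
`h(0) = h′(0) = 0`, satisfies `p(z) = z h′(z) − h(z)` and `h″(z) = p′(z)/z` on `(0,∞)`,
and `ρ h′(ρ) ≤ c h(ρ|0) = c h(ρ)` for all `ρ ≥ 0`. -/
theorem energy_potential_pres_better
    (p : ℝ → ℝ) (c : ℝ) (hc : 0 < c)
    (hp_cont : ContinuousOn p (Ici 0))
    (hp_diff : ∀ z > (0:ℝ), DifferentiableAt ℝ p z)
    (hp_pos : ∀ z > (0:ℝ), 0 < deriv p z)
    (hpc : ∀ z > (0:ℝ), deriv p z ≤ c * p z / z)
    (hint : IntegrableOn (fun z => p z / z ^ 2) (Ioc (0:ℝ) 1))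
    (h : ℝ → ℝ) (hdef : ∀ ρ : ℝ, h ρ = ρ * ∫ z in (0:ℝ)..ρ, p z / z ^ 2) :
    ∃ h' : ℝ → ℝ,
      ContinuousOn h' (Ici 0) ∧
      (∀ ρ ∈ Ici (0:ℝ), HasDerivWithinAt h (h' ρ) (Ici 0) ρ) ∧
      h 0 = 0 ∧ h' 0 = 0 ∧
      (∀ z > (0:ℝ), p z = z * h' z - h z) ∧
      (∀ z > (0:ℝ), HasDerivAt h' (deriv p z / z) z) ∧
      (∀ ρ ≥ (0:ℝ), ρ * h' ρ ≤ c * h ρ) := by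
  exact energy_potential_pres_better_general p c hp_diff hpc hint h hdef
end
end

section
/- Bound for the error term ξ₂: Assume p(ρ) = kρ^γ with k > 0, γ ≥ 1. Let (ρ,n) ∈ L¹_loc((0,∞)×ℝ)² with ρ ≥ 0 a.e., and let (ρ̄,n̄) ∈ C¹((0,∞)×ℝ)² with inf ρ̄ > 0. Then pointwise a.e. the error term ξ₂ = e^{−τ} R̄ (ρ/ρ̄)(n/ρ − n̄/ρ̄), where R̄ = (n̄/ρ̄)R̄₁ − R̄₂ with R̄₁ = ρ̄_τ − (y/2)ρ̄_y + n̄_y and R̄₂ = n̄_τ − (y/2)n̄_y − (1/2)n̄ + (n̄²/ρ̄)_y + e^τ(p(ρ̄)_y + αn̄), satisfies |ξ₂| ≤ (|R̄|/(2kρ̄^γ) + 3|R̄|/(2ρ̄)) e^{−τ/2} η(τ;ρ,n|ρ̄,n̄) + e^{−τ/2}|R̄|. -/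
noncomputable section
open MeasureTheory Real Set Filter

namespace DampedEuler

/-- Partial derivative in the first (time) variable. -/
def pd1 (f : ℝ → ℝ → ℝ) (τ y : ℝ) : ℝ := deriv (fun s => f s y) τ

/-- Partial derivative in the second (space) variable. -/
def pd2 (f : ℝ → ℝ → ℝ) (τ y : ℝ) : ℝ := deriv (f τ) y

/-- Smooth compactly supported test functions on `ℝ × ℝ`. -/
def IsTest (φ : ℝ → ℝ → ℝ) : Prop :=
  ContDiff ℝ (⊤ : ℕ∞) (fun q : ℝ × ℝ => φ q.1 q.2) ∧
  HasCompactSupport (fun q : ℝ × ℝ => φ q.1 q.2)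

/-- `C¹` compactly supported test functions on `ℝ`. -/
def IsTest1 (φ : ℝ → ℝ) : Prop := ContDiff ℝ 1 φ ∧ HasCompactSupport φ

/-- γ-law pressure. -/
def pGam (k γ : ℝ) (z : ℝ) : ℝ := k * z ^ γ

/-- Internal energy for the γ-law. -/
def hGam (k γ : ℝ) (z : ℝ) : ℝ :=
  if γ = 1 then k * z * Real.log z else k / (γ - 1) * z ^ γ

/-- Relative internal energy. -/
def hRel (h : ℝ → ℝ) (ρ ρb : ℝ) : ℝ := h ρ - h ρb - deriv h ρb * (ρ - ρb)

/-- Relative entropy density. -/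
def relEnt (h : ℝ → ℝ) (τ ρ n ρb nb : ℝ) : ℝ :=
  (1/2) * Real.exp (-τ) * ρ * (n / ρ - nb / ρb) ^ 2 + hRel h ρ ρb

/-- Relative entropy flux. -/
def relFlux (h : ℝ → ℝ) (τ ρ n ρb nb : ℝ) : ℝ :=
  (1/2) * Real.exp (-τ) * n * (n / ρ - nb / ρb) ^ 2
    + ρ * (deriv h ρ - deriv h ρb) * (n / ρ - nb / ρb)
    + nb / ρb * hRel h ρ ρb

/-- Total relative entropy. -/
def totE (h : ℝ → ℝ) (τ : ℝ) (ρ n ρb nb : ℝ → ℝ) : ℝ :=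
  ∫ y : ℝ, relEnt h τ (ρ y) (n y) (ρb y) (nb y)

/-- Finiteness of the total relative entropy. -/
def totEFin (h : ℝ → ℝ) (τ : ℝ) (ρ n ρb nb : ℝ → ℝ) : Prop :=
  Integrable (fun y : ℝ => relEnt h τ (ρ y) (n y) (ρb y) (nb y))

/-- The step function `ρ̂`. -/
def rhoHat (ρm ρp : ℝ) (y : ℝ) : ℝ := if y < 0 then ρm else ρp

/-- Entropy density. -/
def entFn (h : ℝ → ℝ) (τ ρ n : ℝ) : ℝ := Real.exp (-τ) * n ^ 2 / (2 * ρ) + h ρ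

/-- Entropy flux. -/
def entFlux (h : ℝ → ℝ) (τ ρ n : ℝ) : ℝ :=
  Real.exp (-τ) * n ^ 3 / (2 * ρ ^ 2) + n * deriv h ρ

/-- Weak solution of the scaled damped Euler system. -/
structure IsWeakSol (p : ℝ → ℝ) (α : ℝ) (ρ n : ℝ → ℝ → ℝ) (ρ₀ n₀ : ℝ → ℝ) : Prop where
  loc_rho : LocallyIntegrableOn (fun q : ℝ × ℝ => ρ q.1 q.2) (Ici 0 ×ˢ univ)
  loc_n : LocallyIntegrableOn (fun q : ℝ × ℝ => n q.1 q.2) (Ici 0 ×ˢ univ)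
  loc_kin : LocallyIntegrableOn (fun q : ℝ × ℝ => (n q.1 q.2) ^ 2 / ρ q.1 q.2) (Ici 0 ×ˢ univ)
  loc_p : LocallyIntegrableOn (fun q : ℝ × ℝ => p (ρ q.1 q.2)) (Ici 0 ×ˢ univ)
  rho_nonneg : ∀ᵐ q : ℝ × ℝ ∂(volume.restrict ((Ici 0) ×ˢ univ)), 0 ≤ ρ q.1 q.2
  mass_eq : ∀ φ : ℝ → ℝ → ℝ, IsTest φ →
    -(∫ τ in Ioi (0:ℝ), ∫ y : ℝ,
        (pd1 φ τ y * ρ τ y + pd2 φ τ y * (-(y / 2) * ρ τ y + n τ y)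
          - (1/2) * φ τ y * ρ τ y))
      = ∫ y : ℝ, φ 0 y * ρ₀ y
  mom_eq : ∀ ψ : ℝ → ℝ → ℝ, IsTest ψ →
    -(∫ τ in Ioi (0:ℝ), ∫ y : ℝ,
        (pd1 ψ τ y * n τ y
          + pd2 ψ τ y * (-(y / 2) * n τ y + (n τ y) ^ 2 / ρ τ y + Real.exp τ * p (ρ τ y))
          - ψ τ y * Real.exp τ * α * n τ y))
      = ∫ y : ℝ, ψ 0 y * n₀ y

/-- Entropy condition (E1). -/
def CondE1 (h : ℝ → ℝ) (α : ℝ) (ρ n : ℝ → ℝ → ℝ) (ρ₀ n₀ : ℝ → ℝ) : Prop :=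
  (∀ T > (0:ℝ), ∃ M : ℝ, ∀ᵐ q : ℝ × ℝ, q.1 ∈ Icc 0 T →
      |ρ q.1 q.2| ≤ M ∧ |n q.1 q.2 / ρ q.1 q.2| ≤ M) ∧
  LocallyIntegrableOn (fun q : ℝ × ℝ => h (ρ q.1 q.2)) (Ici 0 ×ˢ univ) ∧
  ∀ χ : ℝ → ℝ → ℝ, IsTest χ → (∀ τ y, 0 ≤ χ τ y) →
    (∫ τ in Ioi (0:ℝ), ∫ y : ℝ,
        (-(pd1 χ τ y) * entFn h τ (ρ τ y) (n τ y)
          + pd2 χ τ y * (y / 2 * entFn h τ (ρ τ y) (n τ y) - entFlux h τ (ρ τ y) (n τ y))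
          + χ τ y * ((1/2) * entFn h τ (ρ τ y) (n τ y) + α * (n τ y) ^ 2 / ρ τ y)))
      ≤ ∫ y : ℝ, χ 0 y * entFn h 0 (ρ₀ y) (n₀ y)

/-- A smoothened version of the step function. -/
def IsRhoInf (ρm ρp : ℝ) (ρInf : ℝ → ℝ) : Prop :=
  ContDiff ℝ 1 ρInf ∧ ∃ R > (0:ℝ), (∀ y > R, ρInf y = ρp) ∧ ∀ y < -R, ρInf y = ρm

/-- Entropy condition (E2). -/
def CondE2 (h : ℝ → ℝ) (α ρm ρp : ℝ) (ρ n : ℝ → ℝ → ℝ) (ρ₀ n₀ : ℝ → ℝ) : Prop :=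
  ∃ ρInf : ℝ → ℝ, IsRhoInf ρm ρp ρInf ∧
    ∀ φ : ℝ → ℝ, IsTest1 φ → (∀ τ, 0 ≤ φ τ) →
      (∫ τ in Ioi (0:ℝ),
          (-(deriv φ τ) * totE h τ (ρ τ) (n τ) ρInf (fun _ => 0)
            + φ τ * ((1/2) * totE h τ (ρ τ) (n τ) ρInf (fun _ => 0)
              + ∫ y : ℝ, α * (n τ y) ^ 2 / ρ τ y)))
        ≤ φ 0 * totE h 0 ρ₀ n₀ ρInf (fun _ => 0)
          + ∫ τ in Ioi (0:ℝ), φ τ *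
              ∫ y : ℝ, deriv (fun z => deriv h (ρInf z)) y * (y / 2 * (ρ τ y - ρInf y) - n τ y)

/-- First residual. -/
def R1 (ρb nb : ℝ → ℝ → ℝ) (τ y : ℝ) : ℝ :=
  pd1 ρb τ y - y / 2 * pd2 ρb τ y + pd2 nb τ y

/-- Second residual. -/
def R2 (p : ℝ → ℝ) (α : ℝ) (ρb nb : ℝ → ℝ → ℝ) (τ y : ℝ) : ℝ :=
  pd1 nb τ y - y / 2 * pd2 nb τ y - (1/2) * nb τ y
    + pd2 (fun s z => (nb s z) ^ 2 / ρb s z) τ y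
    + Real.exp τ * (pd2 (fun s z => p (ρb s z)) τ y + α * nb τ y)

/-- Combined residual. -/
def Rbar (p : ℝ → ℝ) (α : ℝ) (ρb nb : ℝ → ℝ → ℝ) (τ y : ℝ) : ℝ :=
  nb τ y / ρb τ y * R1 ρb nb τ y - R2 p α ρb nb τ y

/-- Relative pressure. -/
def pRel (p : ℝ → ℝ) (ρ ρb : ℝ) : ℝ := p ρ - p ρb - deriv p ρb * (ρ - ρb)

/-- Error term `ξ₁`. -/
def xi1 (p : ℝ → ℝ) (ρ n ρb nb : ℝ → ℝ → ℝ) (τ y : ℝ) : ℝ :=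
  -(pd2 (fun s z => nb s z / ρb s z) τ y) *
    (Real.exp (-τ) * ρ τ y * (n τ y / ρ τ y - nb τ y / ρb τ y) ^ 2
      + pRel p (ρ τ y) (ρb τ y))

/-- Error term `ξ₂`. -/
def xi2 (p : ℝ → ℝ) (α : ℝ) (ρ n ρb nb : ℝ → ℝ → ℝ) (τ y : ℝ) : ℝ :=
  Real.exp (-τ) * Rbar p α ρb nb τ y * (ρ τ y / ρb τ y)
    * (n τ y / ρ τ y - nb τ y / ρb τ y)

/-- Error term `ξ₃`. -/
def xi3 (h : ℝ → ℝ) (ρ ρb nb : ℝ → ℝ → ℝ) (τ y : ℝ) : ℝ :=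
  -(ρ τ y - ρb τ y) * deriv (deriv h) (ρb τ y) * R1 ρb nb τ y

/-- Total error term `ξ = ξ₁ + ξ₂ + ξ₃`. -/
def xiTot (h p : ℝ → ℝ) (α : ℝ) (ρ n ρb nb : ℝ → ℝ → ℝ) (τ y : ℝ) : ℝ :=
  xi1 p ρ n ρb nb τ y + xi2 p α ρ n ρb nb τ y + xi3 h ρ ρb nb τ y

/-- Integrated error term `Ξ`. -/
def Xi (h p : ℝ → ℝ) (α : ℝ) (ρ n ρb nb : ℝ → ℝ → ℝ) (τ : ℝ) : ℝ :=
  ∫ y : ℝ, xiTot h p α ρ n ρb nb τ y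

/-- Frictional dissipation term `D_α`. -/
def Dalpha (α : ℝ) (ρ n ρb nb : ℝ → ℝ) : ℝ :=
  α * ∫ y : ℝ, ρ y * (n y / ρ y - nb y / ρb y) ^ 2

/-- Regularity of the reference pair: `C¹` on `(0,∞)×ℝ` and continuous on `[0,∞)×ℝ`. -/
def RefReg (ρb nb : ℝ → ℝ → ℝ) : Prop :=
  ContDiffOn ℝ 1 (fun q : ℝ × ℝ => ρb q.1 q.2) (Ioi 0 ×ˢ univ) ∧
  ContDiffOn ℝ 1 (fun q : ℝ × ℝ => nb q.1 q.2) (Ioi 0 ×ˢ univ) ∧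
  ContinuousOn (fun q : ℝ × ℝ => ρb q.1 q.2) (Ici 0 ×ˢ univ) ∧
  ContinuousOn (fun q : ℝ × ℝ => nb q.1 q.2) (Ici 0 ×ˢ univ)

/-- Membership in `L^∞_loc([0,∞); L¹(ℝ) ∩ L^∞(ℝ))`. -/
def LinfLocL1Linf (f : ℝ → ℝ → ℝ) : Prop :=
  ∀ T > (0:ℝ), ∃ M : ℝ, ∀ τ ∈ Icc (0:ℝ) T,
    Integrable (f τ) ∧ (∫ y : ℝ, |f τ y|) ≤ M ∧ ∀ y, |f τ y| ≤ M

/-- The improved pressure condition `(eq:pres.better)`. -/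
def PresBetter (p : ℝ → ℝ) : Prop :=
  (∃ c > (0:ℝ), ∀ z > (0:ℝ), deriv p z ≤ c * p z / z) ∧
  IntegrableOn (fun z => p z / z ^ 2) (Ioc (0:ℝ) 1)

/-- The global relative entropy inequality `(eq:relent.total.weak)`. -/
def RelEntIneq (h p : ℝ → ℝ) (α : ℝ) (ρ n ρb nb : ℝ → ℝ → ℝ) (ρ₀ n₀ : ℝ → ℝ) : Prop :=
  ∀ φ : ℝ → ℝ, IsTest1 φ → (∀ τ, 0 ≤ φ τ) →
    (∫ τ in Ioi (0:ℝ),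
        (-(deriv φ τ) * totE h τ (ρ τ) (n τ) (ρb τ) (nb τ)
          + φ τ * ((1/2) * totE h τ (ρ τ) (n τ) (ρb τ) (nb τ)
            + Dalpha α (ρ τ) (n τ) (ρb τ) (nb τ))))
      ≤ φ 0 * totE h 0 ρ₀ n₀ (ρb 0) (nb 0)
        + ∫ τ in Ioi (0:ℝ), φ τ * Xi h p α ρ n ρb nb τ

/-!
Write `s = √(ρ/ρ̄)` and `w = e^{-τ/2} s |n/ρ - n̄/ρ̄|`, so that `|ξ₂| = e^{-τ/2} |R̄| s w`. Young's
inequality applied to `s w = (s - 1) w + w` bounds this product by `(s - 1)²/2 + (3/4) w² + 1`. Here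
`w²` is the kinetic part of the relative entropy times `2/ρ̄`, and `(s - 1)²` is controlled by the
internal part through `h(ρ|ρ̄) ≥ k ρ̄^{γ-1} (√ρ - √ρ̄)²`. After scaling out `ρ̄`, the latter is
Bernoulli's inequality with exponent `2γ - 1`, or `log s ≥ 1 - 1/s` when `γ = 1`.
-/

lemma sq_sqrt_sub_sqrt_eq_mul {x y : ℝ} (hy : 0 < y) :
    (√x - √y) ^ 2 = y * (√(x / y) - 1) ^ 2 := by
  have hy' : √y ≠ 0 := (Real.sqrt_pos.2 hy).ne'
  rw [Real.sqrt_div' x hy.le]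
  nth_rewrite 2 [← Real.sq_sqrt hy.le]
  field_simp

section RelativeInternalEnergy

variable {k γ t b : ℝ}

lemma hRel_hGam_one (hb : 0 < b) :
    hRel (hGam k 1) (t * b) b = k * b * (t * Real.log t - (t - 1)) := by
  have hfun : hGam k 1 = fun z => k * (z * Real.log z) := by
    funext z
    simp only [hGam, if_true, mul_assoc]
  have hderiv : deriv (hGam k 1) b = k * (Real.log b + 1) := by
    rw [hfun]
    exact ((Real.hasDerivAt_mul_log hb.ne').const_mul k).deriv
  rw [hRel, hderiv, hfun]
  rcases eq_or_ne t 0 with rfl | ht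
  · simp only [zero_mul, mul_zero, zero_sub]
    ring
  · simp only [Real.log_mul ht hb.ne']
    ring

lemma hRel_hGam_of_ne_one (hγ : γ ≠ 1) (ht : 0 ≤ t) (hb : 0 < b) :
    hRel (hGam k γ) (t * b) b = k * b ^ γ * ((t ^ γ - 1 - γ * (t - 1)) / (γ - 1)) := by
  have hfun : hGam k γ = fun z => k / (γ - 1) * z ^ γ := by
    funext z
    simp only [hGam, if_neg hγ]
  have hderiv : deriv (hGam k γ) b = k / (γ - 1) * (γ * b ^ (γ - 1)) := by
    rw [hfun]
    exact ((Real.hasDerivAt_rpow_const (Or.inl hb.ne')).const_mul _).deriv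
  rw [hRel, hderiv, hfun]
  simp only [Real.mul_rpow ht hb.le, Real.rpow_sub_one hb.ne']
  field_simp

lemma sq_sqrt_sub_one_le_mul_log (ht : 0 ≤ t) :
    (√t - 1) ^ 2 ≤ t * Real.log t - (t - 1) := by
  rcases ht.eq_or_lt with rfl | ht
  · simp
  have hs : 0 < √t := Real.sqrt_pos.2 ht
  have hlog : 1 - (√t)⁻¹ ≤ Real.log t / 2 :=
    Real.log_sqrt ht.le ▸ Real.one_sub_inv_le_log_of_pos hs
  calc (√t - 1) ^ 2 = √t ^ 2 * (2 * (1 - (√t)⁻¹)) - (√t ^ 2 - 1) := by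
        field_simp
        ring
    _ = t * (2 * (1 - (√t)⁻¹)) - (t - 1) := by rw [Real.sq_sqrt ht.le]
    _ ≤ t * Real.log t - (t - 1) := by
        gcongr
        linarith

/- Substituting `t = (√t)²` exposes the defect in Bernoulli's inequality with exponent `2γ - 1`,
whose sign is that of `γ - 1` as soon as `2γ - 1 ≥ 0`. -/
lemma rpow_sub_tangent_sub_eq_bernoulli (hγ : γ ≠ 0) (ht : 0 ≤ t) :
    t ^ γ - 1 - γ * (t - 1) - (γ - 1) * (√t - 1) ^ 2
      = √t * ((1 + (√t - 1)) ^ (2 * γ - 1) - (1 + (2 * γ - 1) * (√t - 1))) := by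
  have hpow : √t * √t ^ (2 * γ - 1) = t ^ γ := by
    rcases ht.eq_or_lt with rfl | ht
    · simp [Real.zero_rpow hγ]
    · have hs : 0 < √t := Real.sqrt_pos.2 ht
      rw [Real.rpow_sub_one hs.ne', mul_div_cancel₀ _ hs.ne', Real.rpow_mul hs.le,
        Real.rpow_two, Real.sq_sqrt ht.le]
  rw [add_sub_cancel, ← hpow]
  linear_combination γ * Real.sq_sqrt ht

lemma sq_sqrt_sub_one_le_rpow_sub_tangent_div (hγ : 1 / 2 ≤ γ) (hγ₁ : γ ≠ 1) (ht : 0 ≤ t) :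
    (√t - 1) ^ 2 ≤ (t ^ γ - 1 - γ * (t - 1)) / (γ - 1) := by
  have hs : 0 ≤ √t := Real.sqrt_nonneg t
  have hs' : -1 ≤ √t - 1 := by linarith
  have hdefect := rpow_sub_tangent_sub_eq_bernoulli (by linarith : γ ≠ 0) ht
  rcases hγ₁.lt_or_gt with hlt | hgt
  · have hbernoulli := rpow_one_add_le_one_add_mul_self hs'
      (by linarith : 0 ≤ 2 * γ - 1) (by linarith)
    rw [le_div_iff_of_neg (by linarith)]
    linarith [mul_nonpos_of_nonneg_of_nonpos hs (sub_nonpos.2 hbernoulli)]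
  · have hbernoulli := one_add_mul_self_le_rpow_one_add hs'
      (by linarith : 1 ≤ 2 * γ - 1)
    rw [le_div_iff₀ (by linarith)]
    linarith [mul_nonneg hs (sub_nonneg.2 hbernoulli)]

lemma mul_sq_sqrt_sub_sqrt_le_hRel_hGam {ρ ρb : ℝ} (hk : 0 ≤ k) (hγ : 1 / 2 ≤ γ) (hρ : 0 ≤ ρ)
    (hρb : 0 < ρb) :
    k * ρb ^ (γ - 1) * (√ρ - √ρb) ^ 2 ≤ hRel (hGam k γ) ρ ρb := by
  have ht : 0 ≤ ρ / ρb := div_nonneg hρ hρb.le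
  calc k * ρb ^ (γ - 1) * (√ρ - √ρb) ^ 2 = k * ρb ^ γ * (√(ρ / ρb) - 1) ^ 2 := by
        rw [sq_sqrt_sub_sqrt_eq_mul hρb, Real.rpow_sub_one hρb.ne']
        field_simp
    _ ≤ hRel (hGam k γ) (ρ / ρb * ρb) ρb := by
        rcases eq_or_ne γ 1 with rfl | hγ₁
        · rw [hRel_hGam_one hρb, Real.rpow_one]
          gcongr
          exact sq_sqrt_sub_one_le_mul_log ht
        · rw [hRel_hGam_of_ne_one hγ₁ ht hρb]
          gcongr
          exact sq_sqrt_sub_one_le_rpow_sub_tangent_div hγ hγ₁ ht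
    _ = hRel (hGam k γ) ρ ρb := by rw [div_mul_cancel₀ _ hρb.ne']

end RelativeInternalEnergy

lemma mul_le_sq_sub_one_add_sq_add_one (s w : ℝ) :
    s * w ≤ (s - 1) ^ 2 / 2 + 3 / 4 * w ^ 2 + 1 := by
  linarith [two_mul_le_add_sq (s - 1) w, two_mul_le_add_sq (w / 2) 1]

lemma exp_mul_div_mul_abs_sub_le_relEnt {h : ℝ → ℝ} {c ρ ρb : ℝ} (hc : 0 < c) (hρ : 0 ≤ ρ)
    (hρb : 0 < ρb) (hcoercive : c * (√ρ - √ρb) ^ 2 ≤ hRel h ρ ρb) (τ n nb : ℝ) :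
    Real.exp (-τ / 2) * (ρ / ρb) * |n / ρ - nb / ρb|
      ≤ (1 / (2 * c * ρb) + 3 / (2 * ρb)) * relEnt h τ ρ n ρb nb + 1 := by
  set v := n / ρ - nb / ρb
  set s := √(ρ / ρb)
  set w := s * (Real.exp (-τ / 2) * |v|)
  set K := 1 / 2 * Real.exp (-τ) * ρ * v ^ 2
  have hs : s ^ 2 = ρ / ρb := Real.sq_sqrt (div_nonneg hρ hρb.le)
  have hexp : Real.exp (-τ / 2) ^ 2 = Real.exp (-τ) := by
    rw [← Real.exp_nat_mul]
    congr 1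
    push_cast
    ring
  have hkinetic : 3 / 4 * w ^ 2 = 3 / (2 * ρb) * K := by
    rw [mul_pow, mul_pow, hs, hexp, sq_abs]
    simp only [K]
    field_simp
    ring
  have hinternal : (s - 1) ^ 2 / 2 ≤ 1 / (2 * c * ρb) * hRel h ρ ρb := by
    rw [sq_sqrt_sub_sqrt_eq_mul hρb] at hcoercive
    rw [one_div_mul_eq_div, le_div_iff₀ (by positivity)]
    linarith
  have hrel_nonneg : 0 ≤ hRel h ρ ρb := le_trans (by positivity) hcoercive
  calc Real.exp (-τ / 2) * (ρ / ρb) * |v| = s * w := by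
        rw [← hs]
        ring
    _ ≤ (s - 1) ^ 2 / 2 + 3 / 4 * w ^ 2 + 1 := mul_le_sq_sub_one_add_sq_add_one s w
    _ ≤ 1 / (2 * c * ρb) * (K + hRel h ρ ρb) + 3 / (2 * ρb) * (K + hRel h ρ ρb) + 1 := by
        rw [hkinetic]
        refine add_le_add_left (add_le_add (hinternal.trans ?_) ?_) 1
        · gcongr
          exact le_add_of_nonneg_left (by positivity)
        · gcongr
          exact le_add_of_nonneg_right hrel_nonneg
    _ = (1 / (2 * c * ρb) + 3 / (2 * ρb)) * relEnt h τ ρ n ρb nb + 1 := by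
        rw [relEnt]
        ring

theorem xi2_bound_general {k γ ρ ρb : ℝ} (hk : 0 < k) (hγ : 1 / 2 ≤ γ) (hρ : 0 ≤ ρ)
    (hρb : 0 < ρb) (τ n nb R : ℝ) :
    |Real.exp (-τ) * R * (ρ / ρb) * (n / ρ - nb / ρb)|
      ≤ (|R| / (2 * k * ρb ^ γ) + 3 * |R| / (2 * ρb)) * Real.exp (-τ / 2)
          * relEnt (hGam k γ) τ ρ n ρb nb
        + Real.exp (-τ / 2) * |R| := by
  have hexp : Real.exp (-τ) = Real.exp (-τ / 2) * Real.exp (-τ / 2) := by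
    rw [← Real.exp_add, add_halves]
  have hpow : k * ρb ^ (γ - 1) * ρb = k * ρb ^ γ := by
    rw [Real.rpow_sub_one hρb.ne', mul_assoc, div_mul_cancel₀ _ hρb.ne']
  have hrel := exp_mul_div_mul_abs_sub_le_relEnt (c := k * ρb ^ (γ - 1)) (by positivity) hρ hρb
    (mul_sq_sqrt_sub_sqrt_le_hRel_hGam hk.le hγ hρ hρb) τ n nb
  rw [mul_assoc 2, hpow, ← mul_assoc] at hrel
  calc |Real.exp (-τ) * R * (ρ / ρb) * (n / ρ - nb / ρb)|
      = Real.exp (-τ / 2) * |R| * (Real.exp (-τ / 2) * (ρ / ρb) * |n / ρ - nb / ρb|) := by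
        rw [abs_mul, abs_mul, abs_mul, Real.abs_exp, abs_of_nonneg (div_nonneg hρ hρb.le), hexp]
        ring
    _ ≤ Real.exp (-τ / 2) * |R| * ((1 / (2 * k * ρb ^ γ) + 3 / (2 * ρb))
          * relEnt (hGam k γ) τ ρ n ρb nb + 1) := by gcongr
    _ = _ := by ring

/-- **Bound for the error term `ξ₂`.** -/
theorem xi2_bound
    (k γ α : ℝ) (hk : 0 < k) (hγ : 1 ≤ γ) (hα : 0 ≤ α)
    (ρ n : ℝ → ℝ → ℝ)
    (hρloc : LocallyIntegrableOn (fun q : ℝ × ℝ => ρ q.1 q.2) (Ioi 0 ×ˢ univ))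
    (hnloc : LocallyIntegrableOn (fun q : ℝ × ℝ => n q.1 q.2) (Ioi 0 ×ˢ univ))
    (hρpos : ∀ᵐ q : ℝ × ℝ ∂(volume.restrict (Ioi 0 ×ˢ univ)), 0 ≤ ρ q.1 q.2)
    (ρb nb : ℝ → ℝ → ℝ)
    (hρbC1 : ContDiffOn ℝ 1 (fun q : ℝ × ℝ => ρb q.1 q.2) (Ioi 0 ×ˢ univ))
    (hnbC1 : ContDiffOn ℝ 1 (fun q : ℝ × ℝ => nb q.1 q.2) (Ioi 0 ×ˢ univ))
    (hρbinf : ∃ ε > (0:ℝ), ∀ τ y : ℝ, ε ≤ ρb τ y) :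
    ∀ᵐ q : ℝ × ℝ ∂(volume.restrict (Ioi 0 ×ˢ univ)),
      |xi2 (pGam k γ) α ρ n ρb nb q.1 q.2|
        ≤ (|Rbar (pGam k γ) α ρb nb q.1 q.2| / (2 * k * ρb q.1 q.2 ^ γ)
            + 3 * |Rbar (pGam k γ) α ρb nb q.1 q.2| / (2 * ρb q.1 q.2))
            * Real.exp (-q.1 / 2)
            * relEnt (hGam k γ) q.1 (ρ q.1 q.2) (n q.1 q.2) (ρb q.1 q.2) (nb q.1 q.2)
          + Real.exp (-q.1 / 2) * |Rbar (pGam k γ) α ρb nb q.1 q.2| := by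
  obtain ⟨ε, hε, hρb⟩ := hρbinf
  filter_upwards [hρpos] with q hρq
  exact xi2_bound_general hk (by linarith) hρq (hε.trans_le (hρb _ _)) _ _ _ _

end DampedEuler
end
end

section
/- Generalized Gronwall inequality in variational form: Let E₀ ∈ ℝ and let E, a, b ∈ L¹_loc([0,∞)) be such that τ ↦ a(τ)E(τ) belongs to L¹_loc([0,∞)), and assume that ∫₀^∞ −φ′(τ)E(τ) dτ ≤ E₀ φ(0) + ∫₀^∞ φ(τ)(a(τ)E(τ) + b(τ)) dτ for all nonnegative φ ∈ C¹_c([0,∞)). Then E(τ) ≤ E₀ e^{∫₀^τ a(ν) dν} + ∫₀^τ b(σ) e^{∫_σ^τ a(ν) dν} dσ for almost all τ > 0. -/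
noncomputable section
open MeasureTheory Real Set Filter

open scoped ContDiff ENNReal Interval Topology

/-!
Multiplying the variational inequality by the integrating factor `exp (-∫ a)` reduces it to the case
`a = 0`. Since `a` is only integrable, `exp (-∫ a) * φ` need not be `C¹`, so `a` is replaced by
continuous functions converging to it in `L¹((1 + |E|) dt)`: this weight controls both the
exponentials, uniformly, and the error terms `(αₙ - a) E`. Subtracting the primitive of the
right-hand side then leaves a function `D` satisfying `∫ -φ' D ≤ E₀ φ(0)`. Testing with
`φ(t) = ∫_t^∞ ψ` gives `∫ ψ D ≤ E₀ ∫ ψ` for all bump functions `ψ ≥ 0`, that is, `D ≤ E₀` almost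
everywhere.
-/

section L1Convergence

variable {X : Type*} [MeasurableSpace X] {μ : Measure X}

lemma tendsto_lintegral_enorm_mul_sub_mul {ι R : Type*} [NormedRing R] [NormMulClass R]
    {l : Filter ι} {s : Set X} (hs : MeasurableSet s) {w f : ι → X → R} {w₀ f₀ : X → R}
    {C : ℝ} (hw : TendstoUniformlyOn w w₀ l s) (hC : ∀ x ∈ s, ‖w₀ x‖ ≤ C)
    (hf₀ : IntegrableOn f₀ s μ)
    (hf : Tendsto (fun n => ∫⁻ x in s, ‖f n x - f₀ x‖ₑ ∂μ) l (𝓝 0)) :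
    Tendsto (fun n => ∫⁻ x in s, ‖w n x * f n x - w₀ x * f₀ x‖ₑ ∂μ) l (𝓝 0) := by
  rw [ENNReal.tendsto_nhds_zero]
  intro ε hε
  obtain ⟨δ, hδ, hδf₀⟩ := ENNReal.exists_nnreal_pos_mul_lt hf₀.2.ne (ENNReal.half_pos hε.ne').ne'
  have hf_mul : Tendsto (fun n => ENNReal.ofReal (C + δ) * ∫⁻ x in s, ‖f n x - f₀ x‖ₑ ∂μ) l
      (𝓝 0) := by
    simpa using ENNReal.Tendsto.const_mul hf (Or.inr ENNReal.ofReal_ne_top)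
  filter_upwards [Metric.tendstoUniformlyOn_iff.1 hw δ hδ,
    ENNReal.tendsto_nhds_zero.1 hf_mul _ (ENNReal.half_pos hε.ne')] with n hwn hfn
  have hdist x (hx : x ∈ s) : ‖w n x - w₀ x‖ ≤ δ := by
    rw [← dist_eq_norm, dist_comm]
    exact (hwn x hx).le
  have hbound x (hx : x ∈ s) : ‖w n x‖ ≤ C + δ :=
    calc ‖w n x‖ ≤ ‖w₀ x‖ + ‖w n x - w₀ x‖ := norm_le_norm_add_norm_sub' _ _
      _ ≤ C + δ := add_le_add (hC x hx) (hdist x hx)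
  calc ∫⁻ x in s, ‖w n x * f n x - w₀ x * f₀ x‖ₑ ∂μ
      ≤ ∫⁻ x in s, (ENNReal.ofReal (C + δ) * ‖f n x - f₀ x‖ₑ + δ * ‖f₀ x‖ₑ) ∂μ := by
        refine setLIntegral_mono' hs fun x hx => ?_
        calc ‖w n x * f n x - w₀ x * f₀ x‖ₑ
            = ‖w n x * (f n x - f₀ x) + (w n x - w₀ x) * f₀ x‖ₑ := by congr 1; noncomm_ring
          _ ≤ ‖w n x‖ₑ * ‖f n x - f₀ x‖ₑ + ‖w n x - w₀ x‖ₑ * ‖f₀ x‖ₑ :=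
            (enorm_add_le _ _).trans_eq (by rw [enorm_mul, enorm_mul])
          _ ≤ ENNReal.ofReal (C + δ) * ‖f n x - f₀ x‖ₑ + δ * ‖f₀ x‖ₑ := by
            gcongr
            · exact (ofReal_norm _).symm.trans_le (ENNReal.ofReal_le_ofReal (hbound x hx))
            · exact enorm_le_coe.2 (hdist x hx)
    _ = ENNReal.ofReal (C + δ) * ∫⁻ x in s, ‖f n x - f₀ x‖ₑ ∂μ + δ * ∫⁻ x in s, ‖f₀ x‖ₑ ∂μ := by
        rw [lintegral_add_right' _ (hf₀.1.enorm.const_mul _),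
          lintegral_const_mul' _ _ ENNReal.ofReal_ne_top,
          lintegral_const_mul' _ _ ENNReal.coe_ne_top]
    _ ≤ ε / 2 + ε / 2 := add_le_add hfn (by simpa using hδf₀.le)
    _ = ε := ENNReal.add_halves ε

lemma exists_continuous_seq_tendsto_lintegral_enorm_sub [TopologicalSpace X]
    [TopologicalSpace.PseudoMetrizableSpace X] [BorelSpace X] [IsFiniteMeasure μ] {f g : X → ℝ}
    (hf : Integrable f μ) (hg : Integrable g μ) (hfg : Integrable (fun x => f x * g x) μ) :
    ∃ α : ℕ → X → ℝ, (∀ n, Continuous (α n)) ∧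
      Tendsto (fun n => ∫⁻ x, ‖α n x - f x‖ₑ ∂μ) atTop (𝓝 0) ∧
      Tendsto (fun n => ∫⁻ x, ‖(α n x - f x) * g x‖ₑ ∂μ) atTop (𝓝 0) := by
  let ρ : X → ℝ≥0∞ := fun x => 1 + ‖g x‖ₑ
  have hρ : AEMeasurable ρ μ := hg.1.enorm.const_add 1
  have lintegral_weight {h : X → ℝ} (hh : AEStronglyMeasurable h μ) :
      ∫⁻ x, ‖h x‖ₑ ∂(μ.withDensity ρ) = ∫⁻ x, ‖h x‖ₑ ∂μ + ∫⁻ x, ‖h x * g x‖ₑ ∂μ := by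
    rw [lintegral_withDensity_eq_lintegral_mul₀ hρ hh.enorm, ← lintegral_add_left' hh.enorm]
    refine lintegral_congr fun x => ?_
    simp only [ρ, Pi.mul_apply, enorm_mul]
    ring
  have : IsFiniteMeasure (μ.withDensity ρ) := by
    refine isFiniteMeasure_withDensity ?_
    rw [lintegral_add_left measurable_const, lintegral_const, one_mul]
    exact ENNReal.add_ne_top.2 ⟨measure_ne_top μ univ, hg.2.ne⟩
  have hfρ : Integrable f (μ.withDensity ρ) := by
    refine ⟨hf.1.mono_ac (withDensity_absolutelyContinuous μ ρ), ?_⟩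
    rw [hasFiniteIntegral_iff_enorm, lintegral_weight hf.1]
    exact ENNReal.add_lt_top.2 ⟨hf.2, hfg.2⟩
  choose α hα _ using fun n : ℕ =>
    hfρ.exists_boundedContinuous_lintegral_sub_le (ε := (n + 1 : ℝ≥0∞)⁻¹) (by simp)
  have hα_meas n : AEStronglyMeasurable (fun x => α n x - f x) μ :=
    (α n).continuous.aestronglyMeasurable.sub hf.1
  have hsum : Tendsto (fun n => ∫⁻ x, ‖α n x - f x‖ₑ ∂μ + ∫⁻ x, ‖(α n x - f x) * g x‖ₑ ∂μ)
      atTop (𝓝 0) := by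
    refine tendsto_of_tendsto_of_tendsto_of_le_of_le tendsto_const_nhds
      (ENNReal.tendsto_inv_nat_nhds_zero.comp (tendsto_add_atTop_nat 1))
      (fun n => zero_le) (fun n => ?_)
    simpa only [← lintegral_weight (hα_meas n), enorm_sub_rev (f _), Function.comp_apply,
      Nat.cast_add, Nat.cast_one] using hα n
  refine ⟨fun n => α n, fun n => (α n).continuous, ?_, ?_⟩
  · exact tendsto_of_tendsto_of_tendsto_of_le_of_le tendsto_const_nhds hsum
      (fun n => zero_le) (fun n => le_self_add)
  · exact tendsto_of_tendsto_of_tendsto_of_le_of_le tendsto_const_nhds hsum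
      (fun n => zero_le) (fun n => le_add_self)

end L1Convergence
section UniformConvergence

variable {ι : Type*} {l : Filter ι}

lemma tendstoUniformlyOn_continuous_comp {X α β : Type*} [NormedAddCommGroup α] [ProperSpace α]
    [UniformSpace β] {s : Set X} {w : ι → X → α} {w₀ : X → α} {g : α → β} {C : ℝ}
    (hg : Continuous g) (hw : TendstoUniformlyOn w w₀ l s) (hC : ∀ x ∈ s, ‖w₀ x‖ ≤ C) :
    TendstoUniformlyOn (fun i x => g (w i x)) (fun x => g (w₀ x)) l s := by
  refine ((isCompact_closedBall (0 : α) (C + 1)).uniformContinuousOn_of_continuous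
    hg.continuousOn).comp_tendstoUniformlyOn_eventually ?_ (fun x hx => ?_) hw
  · filter_upwards [Metric.tendstoUniformlyOn_iff.1 hw 1 one_pos] with i hi x hx
    rw [mem_closedBall_zero_iff]
    calc ‖w i x‖ ≤ ‖w₀ x‖ + ‖w i x - w₀ x‖ := norm_le_norm_add_norm_sub' _ _
      _ ≤ C + 1 := add_le_add (hC x hx) (by simpa only [dist_eq_norm'] using (hi x hx).le)
  · exact mem_closedBall_zero_iff.2 ((hC x hx).trans (by simp))

lemma tendstoUniformlyOn_intervalIntegral {E : Type*} [NormedAddCommGroup E] [NormedSpace ℝ E]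
    {μ : Measure ℝ} {c d : ℝ} {g : ι → ℝ → E} {f : ℝ → E} (hg : ∀ i, IntervalIntegrable (g i) μ c d)
    (hf : IntervalIntegrable f μ c d)
    (hgf : Tendsto (fun i => ∫⁻ t in Ι c d, ‖g i t - f t‖ₑ ∂μ) l (𝓝 0)) :
    TendstoUniformlyOn (fun i t => ∫ s in c..t, g i s ∂μ) (fun t => ∫ s in c..t, f s ∂μ) l
      [[c, d]] := by
  rw [Metric.tendstoUniformlyOn_iff]
  intro ε hε
  filter_upwards [hgf.eventually_lt_const (ENNReal.ofReal_pos.2 hε)] with i hi t ht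
  have hct : [[c, t]] ⊆ [[c, d]] := uIcc_subset_uIcc_left ht
  rw [dist_comm, dist_eq_norm,
    ← intervalIntegral.integral_sub ((hg i).mono_set hct) (hf.mono_set hct),
    intervalIntegral.norm_intervalIntegral_eq, ← ENNReal.ofReal_lt_ofReal_iff hε, ofReal_norm]
  calc ‖∫ s in Ι c t, (g i s - f s) ∂μ‖ₑ
      ≤ ∫⁻ s in Ι c t, ‖g i s - f s‖ₑ ∂μ := enorm_integral_le_lintegral_enorm _
    _ ≤ ∫⁻ s in Ι c d, ‖g i s - f s‖ₑ ∂μ :=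
        lintegral_mono_set (uIoc_subset_uIoc_of_uIcc_subset_uIcc hct)
    _ < ENNReal.ofReal ε := hi

end UniformConvergence

section IntervalIntegral

variable {E : Type*} [NormedAddCommGroup E]

lemma intervalIntegrable_of_locallyIntegrableOn {f : ℝ → E} {μ : Measure ℝ} {s : Set ℝ} {c d : ℝ}
    (hf : LocallyIntegrableOn f s μ) (hs : [[c, d]] ⊆ s) : IntervalIntegrable f μ c d :=
  (hf.integrableOn_compact_subset hs isCompact_uIcc).intervalIntegrable

variable [NormedSpace ℝ E]

lemma setIntegral_Ioi_eq_intervalIntegral {f : ℝ → E} {c d : ℝ} (hcd : c ≤ d)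
    (hf : ∀ t, d < t → f t = 0) :
    ∫ t in Ioi c, f t = ∫ t in c..d, f t := by
  rw [intervalIntegral.integral_of_le hcd]
  refine setIntegral_eq_of_subset_of_forall_sdiff_eq_zero measurableSet_Ioi
    Ioc_subset_Ioi_self fun t ht => hf t ?_
  exact not_le.1 fun htd => ht.2 ⟨ht.1, htd⟩

lemma contDiff_one_intervalIntegral [CompleteSpace E] {f : ℝ → E} (hf : Continuous f) (c : ℝ) :
    ContDiff ℝ 1 (fun t => ∫ s in c..t, f s) := by
  refine contDiff_one_iff_deriv.2
    ⟨fun t => (hf.integral_hasStrictDerivAt c t).hasDerivAt.differentiableAt, ?_⟩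
  rwa [funext (hf.deriv_integral f c)]

lemma integral_mul_exp_integral_eq {a : ℝ → ℝ} {c τ : ℝ}
    (ha : IntervalIntegrable a volume c τ) (b : ℝ → ℝ) :
    ∫ σ in c..τ, b σ * exp (∫ s in σ..τ, a s) =
      exp (∫ s in c..τ, a s) * ∫ σ in c..τ, exp (-∫ s in c..σ, a s) * b σ := by
  rw [← intervalIntegral.integral_const_mul]
  refine intervalIntegral.integral_congr fun σ hσ => ?_
  have hsplit : ∫ s in σ..τ, a s = (∫ s in c..τ, a s) - ∫ s in c..σ, a s :=
    (intervalIntegral.integral_interval_sub_left ha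
      (ha.mono_set (uIcc_subset_uIcc_left hσ))).symm
  simp only [hsplit, sub_eq_add_neg, exp_add]
  ring

end IntervalIntegral

section TestFunctions

lemma exists_contDiff_hasCompactSupport_eqOn_Ici {φ : ℝ → ℝ} {n : ℕ∞} {d : ℝ}
    (hφ : ContDiff ℝ n φ) (hφ_nonneg : ∀ t, 0 ≤ φ t) (hφ_zero : ∀ t, d ≤ t → φ t = 0) (c : ℝ) :
    ∃ ψ : ℝ → ℝ, ContDiff ℝ n ψ ∧ HasCompactSupport ψ ∧ (∀ t, 0 ≤ ψ t) ∧ EqOn ψ φ (Ici c) := by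
  refine ⟨fun t => smoothTransition (t - c + 1) * φ t,
    (smoothTransition.contDiff.comp (by fun_prop)).mul hφ,
    HasCompactSupport.intro' (K := Icc (c - 1) d) isCompact_Icc isClosed_Icc fun t ht => ?_,
    fun t => mul_nonneg (smoothTransition.nonneg _) (hφ_nonneg t), fun t ht => ?_⟩
  · rcases lt_or_ge t (c - 1) with htc | htc
    · rw [smoothTransition.zero_of_nonpos (by linarith), zero_mul]
    · rw [hφ_zero t (not_lt.1 fun htd => ht ⟨htc, htd.le⟩), mul_zero]
  · have hct : c ≤ t := ht
    simp only [smoothTransition.one_of_one_le (show 1 ≤ t - c + 1 by linarith), one_mul]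

lemma ae_nonpos_of_forall_integral_contDiff_mul_nonpos {G : Type*}
    [NormedAddCommGroup G] [NormedSpace ℝ G] [FiniteDimensional ℝ G]
    [MeasurableSpace G] [BorelSpace G] {μ : Measure G} [μ.IsAddHaarMeasure] {f : G → ℝ} {U : Set G}
    (hf : LocallyIntegrable f μ) (hU : IsOpen U)
    (h : ∀ ψ : G → ℝ, ContDiff ℝ ∞ ψ → HasCompactSupport ψ → tsupport ψ ⊆ U → (∀ x, 0 ≤ ψ x) →
      ∫ x, ψ x * f x ∂μ ≤ 0) :
    ∀ᵐ x ∂μ, x ∈ U → f x ≤ 0 := by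
  let β : ℕ → ContDiffBump (0 : G) := fun n =>
    ⟨1 / (n + 1 : ℝ) / 2, 1 / (n + 1 : ℝ), by positivity, half_lt_self (by positivity)⟩
  have hβ : Tendsto (fun n => (β n).rOut) atTop (𝓝 0) := tendsto_one_div_add_atTop_nhds_zero_nat
  filter_upwards [ContDiffBump.ae_convolution_tendsto_right_of_locallyIntegrable (K := 2) hβ
    (Eventually.of_forall fun n => (mul_div_cancel₀ _ two_ne_zero).ge) hf] with x hx hxU
  obtain ⟨ε, hε, hεU⟩ := Metric.isOpen_iff.1 hU x hxU
  refine le_of_tendsto hx ?_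
  filter_upwards [hβ.eventually_lt_const hε] with n hn
  rw [convolution_eq_swap]
  refine h (fun t => (β n).normed μ (x - t))
    ((β n).contDiff_normed.comp (contDiff_const.sub contDiff_id))
    ((β n).hasCompactSupport_normed.comp_homeomorph (Homeomorph.subLeft x)) (fun t ht => ?_)
    (fun t => (β n).nonneg_normed _)
  have hxt : x - t ∈ tsupport ((β n).normed μ) :=
    tsupport_comp_subset_preimage _ (continuous_const.sub continuous_id) ht
  rw [(β n).tsupport_normed_eq, mem_closedBall_zero_iff, ← dist_eq_norm, dist_comm] at hxt
  exact hεU (hxt.trans_lt hn)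

end TestFunctions

section WeakSubsolution

/-- `IsWeakSubsolution c d u₀ u F` is the variational form, on the time interval `[c, d)`, of the
differential inequality `u' ≤ F` with initial condition `u(c) ≤ u₀`. The test functions are defined
on all of `ℝ` and vanish on `[d, ∞)`; they need not vanish at `c`. -/
def IsWeakSubsolution (c d u₀ : ℝ) (u F : ℝ → ℝ) : Prop :=
  ∀ φ : ℝ → ℝ, ContDiff ℝ 1 φ → (∀ t, 0 ≤ φ t) → (∀ t, d ≤ t → φ t = 0) →
    ∫ t in c..d, -(deriv φ t) * u t ≤ u₀ * φ c + ∫ t in c..d, φ t * F t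

variable {c d u₀ : ℝ} {u F : ℝ → ℝ}

lemma isWeakSubsolution_of_forall_hasCompactSupport (hcd : c ≤ d)
    (h : ∀ φ : ℝ → ℝ, ContDiff ℝ 1 φ → HasCompactSupport φ → (∀ t, 0 ≤ φ t) →
      ∫ t in Ioi c, -(deriv φ t) * u t ≤ u₀ * φ c + ∫ t in Ioi c, φ t * F t) :
    IsWeakSubsolution c d u₀ u F := by
  intro φ hφ hφ_nonneg hφ_zero
  obtain ⟨ψ, hψ, hψ_supp, hψ_nonneg, hψφ⟩ :=
    exists_contDiff_hasCompactSupport_eqOn_Ici hφ hφ_nonneg hφ_zero c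
  have hderiv_zero t (ht : d < t) : deriv φ t = 0 := by
    have hφ_eq : φ =ᶠ[𝓝 t] fun _ => 0 := (eventually_gt_nhds ht).mono fun s hs => hφ_zero s hs.le
    rw [hφ_eq.deriv_eq, deriv_const]
  have hderiv : EqOn (deriv ψ) (deriv φ) (Ioi c) := fun t ht =>
    (hψφ.eventuallyEq_of_mem (Ici_mem_nhds ht)).deriv_eq
  rw [← setIntegral_Ioi_eq_intervalIntegral hcd fun t ht => by rw [hderiv_zero t ht]; ring,
    ← setIntegral_Ioi_eq_intervalIntegral hcd fun t ht => by rw [hφ_zero t ht.le, zero_mul],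
    ← hψφ self_mem_Ici]
  convert h ψ hψ hψ_supp hψ_nonneg using 1
  · exact setIntegral_congr_fun measurableSet_Ioi fun t ht => by simp only [hderiv ht]
  · congr 1
    exact setIntegral_congr_fun measurableSet_Ioi fun t ht => by
      simp only [hψφ (Ioi_subset_Ici_self ht)]

namespace IsWeakSubsolution

lemma contDiff_mul {w : ℝ → ℝ} (h : IsWeakSubsolution c d u₀ u F)
    (hu : IntervalIntegrable u volume c d) (hF : IntervalIntegrable F volume c d)
    (hw : ContDiff ℝ 1 w) (hw_nonneg : ∀ t, 0 ≤ w t) :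
    IsWeakSubsolution c d (w c * u₀) (fun t => w t * u t)
      (fun t => w t * F t + deriv w t * u t) := by
  intro φ hφ hφ_nonneg hφ_zero
  have hderiv t : deriv (w * φ) t = deriv w t * φ t + w t * deriv φ t :=
    deriv_mul (hw.differentiable one_ne_zero t) (hφ.differentiable one_ne_zero t)
  have hw'φu : IntervalIntegrable (fun t => (φ t * deriv w t) * u t) volume c d :=
    hu.continuousOn_mul (hφ.continuous.mul (hw.continuous_deriv le_rfl)).continuousOn
  have hwφ'u : IntervalIntegrable (fun t => (w t * -deriv φ t) * u t) volume c d :=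
    hu.continuousOn_mul (hw.continuous.mul (hφ.continuous_deriv le_rfl).neg).continuousOn
  have hwφF : IntervalIntegrable (fun t => (w t * φ t) * F t) volume c d :=
    hF.continuousOn_mul (hw.continuous.mul hφ.continuous).continuousOn
  have htest := h (w * φ) (hw.mul hφ) (fun t => mul_nonneg (hw_nonneg t) (hφ_nonneg t))
    (fun t ht => by simp only [Pi.mul_apply, hφ_zero t ht, mul_zero])
  calc ∫ t in c..d, -deriv φ t * (w t * u t)
      = (∫ t in c..d, -deriv (w * φ) t * u t) + ∫ t in c..d, (φ t * deriv w t) * u t := by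
        have hsplit t : -deriv (w * φ) t * u t =
            (w t * -deriv φ t) * u t - (φ t * deriv w t) * u t := by rw [hderiv]; ring
        simp only [hsplit, intervalIntegral.integral_sub hwφ'u hw'φu, sub_add_cancel]
        exact intervalIntegral.integral_congr fun t _ => by ring
    _ ≤ u₀ * (w c * φ c) + (∫ t in c..d, (w t * φ t) * F t)
        + ∫ t in c..d, (φ t * deriv w t) * u t := by gcongr; exact htest
    _ = w c * u₀ * φ c + ∫ t in c..d, φ t * (w t * F t + deriv w t * u t) := by
        rw [add_assoc, ← intervalIntegral.integral_add hwφF hw'φu]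
        congr 1
        · ring
        · exact intervalIntegral.integral_congr fun t _ => by ring

lemma of_tendsto_lintegral {ι : Type*} {l : Filter ι} [l.NeBot] {v G : ι → ℝ → ℝ} (hcd : c ≤ d)
    (h : ∀ n, IsWeakSubsolution c d u₀ (v n) (G n))
    (hv : ∀ n, IntervalIntegrable (v n) volume c d) (hu : IntervalIntegrable u volume c d)
    (hG : ∀ n, IntervalIntegrable (G n) volume c d) (hF : IntervalIntegrable F volume c d)
    (hvu : Tendsto (fun n => ∫⁻ t in Ioc c d, ‖v n t - u t‖ₑ) l (𝓝 0))
    (hGF : Tendsto (fun n => ∫⁻ t in Ioc c d, ‖G n t - F t‖ₑ) l (𝓝 0)) :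
    IsWeakSubsolution c d u₀ u F := by
  intro φ hφ hφ_nonneg hφ_zero
  have tendsto_integral {ψ f : ℝ → ℝ} {g : ι → ℝ → ℝ} (hψ : Continuous ψ)
      (hf : IntervalIntegrable f volume c d) (hg : ∀ n, IntervalIntegrable (g n) volume c d)
      (hgf : Tendsto (fun n => ∫⁻ t in Ioc c d, ‖g n t - f t‖ₑ) l (𝓝 0)) :
      Tendsto (fun n => ∫ t in c..d, ψ t * g n t) l (𝓝 (∫ t in c..d, ψ t * f t)) := by
    obtain ⟨C, hC⟩ := isCompact_Icc.exists_bound_of_continuousOn (hψ.continuousOn (s := Icc c d))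
    simp only [intervalIntegral.integral_of_le hcd]
    refine tendsto_integral_of_L1 _ (hf.continuousOn_mul hψ.continuousOn).1.aestronglyMeasurable
      (Eventually.of_forall fun n => ((hg n).continuousOn_mul hψ.continuousOn).1) ?_
    exact tendsto_lintegral_enorm_mul_sub_mul measurableSet_Ioc
      (fun _ hU => Eventually.of_forall fun _ _ _ => refl_mem_uniformity hU)
      (fun t ht => hC t (Ioc_subset_Icc_self ht)) hf.1 hgf
  exact le_of_tendsto_of_tendsto' (tendsto_integral (hφ.continuous_deriv le_rfl).neg hu hv hvu)
    (tendsto_const_nhds.add (tendsto_integral hφ.continuous hF hG hGF))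
    fun n => h n φ hφ hφ_nonneg hφ_zero

lemma mul_exp_neg_integral_of_continuous {α : ℝ → ℝ} (h : IsWeakSubsolution c d u₀ u F)
    (hu : IntervalIntegrable u volume c d) (hF : IntervalIntegrable F volume c d)
    (hα : Continuous α) :
    IsWeakSubsolution c d u₀ (fun t => exp (-∫ s in c..t, α s) * u t)
      (fun t => exp (-∫ s in c..t, α s) * (F t - α t * u t)) := by
  have hw_deriv t : HasDerivAt (fun t => exp (-∫ s in c..t, α s))
      (exp (-∫ s in c..t, α s) * -α t) t :=
    (hα.integral_hasStrictDerivAt c t).hasDerivAt.neg.exp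
  have hw : ContDiff ℝ 1 (fun t => exp (-∫ s in c..t, α s)) :=
    (contDiff_one_intervalIntegral hα c).neg.exp
  convert h.contDiff_mul hu hF hw (fun t => (exp_pos _).le) using 1
  · rw [intervalIntegral.integral_same, neg_zero, exp_zero, one_mul]
  · ext t
    rw [(hw_deriv t).deriv]
    ring

lemma mul_exp_neg_integral {a b : ℝ → ℝ} (hcd : c ≤ d)
    (h : IsWeakSubsolution c d u₀ u (fun t => a t * u t + b t))
    (hu : IntervalIntegrable u volume c d) (ha : IntervalIntegrable a volume c d)
    (hau : IntervalIntegrable (fun t => a t * u t) volume c d)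
    (hb : IntervalIntegrable b volume c d) :
    IsWeakSubsolution c d u₀ (fun t => exp (-∫ s in c..t, a s) * u t)
      (fun t => exp (-∫ s in c..t, a s) * b t) := by
  obtain ⟨α, hα, hαa, hαau⟩ :=
    exists_continuous_seq_tendsto_lintegral_enorm_sub ha.1 hu.1 hau.1
  have hw_cont : ContinuousOn (fun t => exp (-∫ s in c..t, a s)) [[c, d]] :=
    (intervalIntegral.continuousOn_primitive_interval' ha left_mem_uIcc).neg.rexp
  have hwα_cont n : ContinuousOn (fun t => exp (-∫ s in c..t, α n s)) [[c, d]] :=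
    (intervalIntegral.continuous_primitive (hα n).intervalIntegrable c).neg.rexp.continuousOn
  have hG n : IntervalIntegrable (fun t => b t - (α n t - a t) * u t) volume c d := by
    simpa only [sub_mul] using hb.sub ((hu.continuousOn_mul (hα n).continuousOn).sub hau)
  have hwα n : IsWeakSubsolution c d u₀ (fun t => exp (-∫ s in c..t, α n s) * u t)
      (fun t => exp (-∫ s in c..t, α n s) * (b t - (α n t - a t) * u t)) := by
    convert h.mul_exp_neg_integral_of_continuous hu (hau.add hb) (hα n) using 3
    ring
  have hw_lim : TendstoUniformlyOn (fun n t => exp (-∫ s in c..t, α n s))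
      (fun t => exp (-∫ s in c..t, a s)) atTop (Ioc c d) := by
    obtain ⟨C, hC⟩ := isCompact_uIcc.exists_bound_of_continuousOn
      (intervalIntegral.continuousOn_primitive_interval' ha left_mem_uIcc)
    refine (tendstoUniformlyOn_continuous_comp (continuous_exp.comp continuous_neg)
      (tendstoUniformlyOn_intervalIntegral (fun n => (hα n).intervalIntegrable c d) ha ?_) hC).mono
      (Ioc_subset_uIoc.trans uIoc_subset_uIcc)
    rwa [uIoc_of_le hcd]
  obtain ⟨C, hC⟩ := isCompact_uIcc.exists_bound_of_continuousOn hw_cont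
  have hC_Ioc t (ht : t ∈ Ioc c d) := hC t (Ioc_subset_uIoc.trans uIoc_subset_uIcc ht)
  refine of_tendsto_lintegral hcd hwα (fun n => hu.continuousOn_mul (hwα_cont n))
    (hu.continuousOn_mul hw_cont) (fun n => (hG n).continuousOn_mul (hwα_cont n))
    (hb.continuousOn_mul hw_cont)
    (tendsto_lintegral_enorm_mul_sub_mul measurableSet_Ioc hw_lim hC_Ioc hu.1 (by simp))
    (tendsto_lintegral_enorm_mul_sub_mul measurableSet_Ioc hw_lim hC_Ioc hb.1 ?_)
  simpa only [sub_sub_cancel_left, enorm_neg] using hαau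

lemma sub_integral (h : IsWeakSubsolution c d u₀ u F) (hu : IntervalIntegrable u volume c d)
    (hF : IntervalIntegrable F volume c d) :
    IsWeakSubsolution c d u₀ (fun t => u t - ∫ s in c..t, F s) (fun _ => 0) := by
  intro φ hφ hφ_nonneg hφ_zero
  have hφ'_cont : Continuous (deriv φ) := hφ.continuous_deriv le_rfl
  have hφ_ac : AbsolutelyContinuousOnInterval φ c d := hφ.contDiffOn.absolutelyContinuousOnInterval
  have hP_ac : AbsolutelyContinuousOnInterval (fun t => ∫ s in c..t, F s) c d :=
    hF.absolutelyContinuousOnInterval_intervalIntegral left_mem_uIcc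
  have hparts : ∫ t in c..d, φ t * F t = ∫ t in c..d, -(deriv φ t) * ∫ s in c..t, F s := by
    have hP_deriv : ∫ t in c..d, φ t * deriv (fun t => ∫ s in c..t, F s) t =
        ∫ t in c..d, φ t * F t := by
      refine intervalIntegral.integral_congr_ae ?_
      filter_upwards [hF.ae_hasDerivAt_integral] with t ht htcd
      rw [(ht (uIoc_subset_uIcc htcd) c left_mem_uIcc).deriv]
    rw [← hP_deriv, hφ_ac.integral_mul_deriv_eq_deriv_mul hP_ac, hφ_zero d le_rfl,
      intervalIntegral.integral_same]
    simp
  have hφ'u : IntervalIntegrable (fun t => -(deriv φ t) * u t) volume c d :=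
    hu.continuousOn_mul hφ'_cont.neg.continuousOn
  have hφ'P : IntervalIntegrable (fun t => -(deriv φ t) * ∫ s in c..t, F s) volume c d :=
    hP_ac.continuousOn.intervalIntegrable.continuousOn_mul hφ'_cont.neg.continuousOn
  simp only [mul_sub, intervalIntegral.integral_sub hφ'u hφ'P, mul_zero,
    intervalIntegral.integral_zero, add_zero]
  rw [sub_le_iff_le_add, ← hparts]
  exact h φ hφ hφ_nonneg hφ_zero

lemma integral_mul_le {ψ : ℝ → ℝ} (h : IsWeakSubsolution c d u₀ u (fun _ => 0))
    (hψ : Continuous ψ) (hψ_nonneg : ∀ t, 0 ≤ ψ t) (hψ_zero : ∀ t, d ≤ t → ψ t = 0) :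
    ∫ t in c..d, ψ t * u t ≤ u₀ * ∫ t in c..d, ψ t := by
  have hφ : ContDiff ℝ 1 (fun t => ∫ s in t..d, ψ s) := by
    simpa only [← intervalIntegral.integral_symm] using (contDiff_one_intervalIntegral hψ d).neg
  have hφ_deriv t : deriv (fun t => ∫ s in t..d, ψ s) t = -ψ t :=
    (intervalIntegral.integral_hasDerivAt_left (hψ.intervalIntegrable t d)
      (hψ.stronglyMeasurableAtFilter _ _) hψ.continuousAt).deriv
  have hφ_zero t (ht : d ≤ t) : ∫ s in t..d, ψ s = 0 := by
    refine intervalIntegral.integral_zero_ae (Eventually.of_forall fun s hs => hψ_zero s ?_)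
    rw [uIoc_of_ge ht] at hs
    exact hs.1.le
  have hφ_nonneg t : 0 ≤ ∫ s in t..d, ψ s := by
    rcases le_total t d with ht | ht
    · exact intervalIntegral.integral_nonneg ht fun s _ => hψ_nonneg s
    · exact (hφ_zero t ht).ge
  simpa only [hφ_deriv, neg_neg, mul_zero, intervalIntegral.integral_zero, add_zero]
    using h _ hφ hφ_nonneg hφ_zero

lemma ae_le_initial (hcd : c ≤ d) (h : IsWeakSubsolution c d u₀ u (fun _ => 0))
    (hu : IntervalIntegrable u volume c d) :
    ∀ᵐ t, t ∈ Ioo c d → u t ≤ u₀ := by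
  have hf : LocallyIntegrable ((Ioc c d).indicator fun t => u t - u₀) :=
    ((hu.sub intervalIntegrable_const).1.integrable_indicator measurableSet_Ioc).locallyIntegrable
  have htest (ψ : ℝ → ℝ) (hψ : ContDiff ℝ ∞ ψ) (_ : HasCompactSupport ψ)
      (hψ_supp : tsupport ψ ⊆ Ioo c d) (hψ_nonneg : ∀ t, 0 ≤ ψ t) :
      ∫ t, ψ t * (Ioc c d).indicator (fun t => u t - u₀) t ≤ 0 := by
    have hψ_zero t (ht : d ≤ t) : ψ t = 0 :=
      image_eq_zero_of_notMem_tsupport fun hts => ht.not_gt (hψ_supp hts).2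
    calc ∫ t, ψ t * (Ioc c d).indicator (fun t => u t - u₀) t
        = ∫ t in c..d, (ψ t * u t - ψ t * u₀) := by
          simp only [← indicator_mul_right, integral_indicator measurableSet_Ioc, mul_sub,
            intervalIntegral.integral_of_le hcd]
      _ = (∫ t in c..d, ψ t * u t) - u₀ * ∫ t in c..d, ψ t := by
          rw [intervalIntegral.integral_sub (hu.continuousOn_mul hψ.continuous.continuousOn)
            ((hψ.continuous.intervalIntegrable c d).mul_const u₀),
            intervalIntegral.integral_mul_const, mul_comm u₀]
      _ ≤ 0 := sub_nonpos.2 (h.integral_mul_le hψ.continuous hψ_nonneg hψ_zero)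
  filter_upwards [ae_nonpos_of_forall_integral_contDiff_mul_nonpos hf isOpen_Ioo htest]
    with t ht htcd
  simpa only [indicator_of_mem (Ioo_subset_Ioc_self htcd), sub_nonpos] using ht htcd

lemma ae_mul_exp_neg_integral_le {a b : ℝ → ℝ} (hcd : c ≤ d)
    (h : IsWeakSubsolution c d u₀ u (fun t => a t * u t + b t))
    (hu : IntervalIntegrable u volume c d) (ha : IntervalIntegrable a volume c d)
    (hau : IntervalIntegrable (fun t => a t * u t) volume c d)
    (hb : IntervalIntegrable b volume c d) :
    ∀ᵐ t, t ∈ Ioo c d → exp (-∫ s in c..t, a s) * u t ≤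
      u₀ + ∫ σ in c..t, exp (-∫ s in c..σ, a s) * b σ := by
  have hw : ContinuousOn (fun t => exp (-∫ s in c..t, a s)) [[c, d]] :=
    (intervalIntegral.continuousOn_primitive_interval' ha left_mem_uIcc).neg.rexp
  have hwu := hu.continuousOn_mul hw
  have hwb := hb.continuousOn_mul hw
  have hprim : IntervalIntegrable (fun t => ∫ σ in c..t, exp (-∫ s in c..σ, a s) * b σ)
      volume c d :=
    (intervalIntegral.continuousOn_primitive_interval' hwb left_mem_uIcc).intervalIntegrable
  filter_upwards [ae_le_initial hcd ((h.mul_exp_neg_integral hcd hu ha hau hb).sub_integral hwu hwb)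
    (hwu.sub hprim)] with t ht htcd
  exact sub_le_iff_le_add.1 (ht htcd)

theorem ae_le_gronwall {a b : ℝ → ℝ} (hcd : c ≤ d)
    (h : IsWeakSubsolution c d u₀ u (fun t => a t * u t + b t))
    (hu : IntervalIntegrable u volume c d) (ha : IntervalIntegrable a volume c d)
    (hau : IntervalIntegrable (fun t => a t * u t) volume c d)
    (hb : IntervalIntegrable b volume c d) :
    ∀ᵐ t, t ∈ Ioo c d → u t ≤
      u₀ * exp (∫ s in c..t, a s) + ∫ σ in c..t, b σ * exp (∫ s in σ..t, a s) := by
  filter_upwards [h.ae_mul_exp_neg_integral_le hcd hu ha hau hb] with t ht htcd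
  have ha_ct : IntervalIntegrable a volume c t :=
    ha.mono_set (uIcc_subset_uIcc_left (Icc_subset_uIcc (Ioo_subset_Icc_self htcd)))
  rw [integral_mul_exp_integral_eq ha_ct, mul_comm u₀, ← mul_add]
  calc u t = exp (∫ s in c..t, a s) * (exp (-∫ s in c..t, a s) * u t) := by
        rw [← mul_assoc, ← exp_add, add_neg_cancel, exp_zero, one_mul]
    _ ≤ exp (∫ s in c..t, a s) * (u₀ + ∫ σ in c..t, exp (-∫ s in c..σ, a s) * b σ) :=
        mul_le_mul_of_nonneg_left (ht htcd) (exp_pos _).le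

end IsWeakSubsolution

end WeakSubsolution

/-- **Generalized Gronwall inequality in variational form.**
If `E, a, b` are locally integrable on `[0,∞)`, `τ ↦ a τ * E τ` is locally integrable,
and for every nonnegative `φ ∈ C¹_c([0,∞))` one has
`∫₀^∞ −φ′ E ≤ E₀ φ(0) + ∫₀^∞ φ (aE + b)`, then for almost all `τ > 0`,
`E τ ≤ E₀ exp(∫₀^τ a) + ∫₀^τ b σ exp(∫_σ^τ a) dσ`. -/
theorem gronwall_variational
    (E₀ : ℝ) (E a b : ℝ → ℝ)
    (hE : LocallyIntegrableOn E (Ici 0))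
    (ha : LocallyIntegrableOn a (Ici 0))
    (hb : LocallyIntegrableOn b (Ici 0))
    (haE : LocallyIntegrableOn (fun τ => a τ * E τ) (Ici 0))
    (hineq : ∀ φ : ℝ → ℝ, ContDiff ℝ 1 φ → HasCompactSupport φ → (∀ τ, 0 ≤ φ τ) →
      (∫ τ in Ioi (0:ℝ), -(deriv φ τ) * E τ)
        ≤ E₀ * φ 0 + ∫ τ in Ioi (0:ℝ), φ τ * (a τ * E τ + b τ)) :
    ∀ᵐ τ ∂(volume.restrict (Ioi (0:ℝ))),
      E τ ≤ E₀ * Real.exp (∫ ν in (0:ℝ)..τ, a ν)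
        + ∫ σ in (0:ℝ)..τ, b σ * Real.exp (∫ ν in σ..τ, a ν) := by
  have hn_nonneg (n : ℕ) : (0 : ℝ) ≤ n := n.cast_nonneg
  have hIcc (n : ℕ) : [[(0 : ℝ), n]] ⊆ Ici 0 := uIcc_of_le (hn_nonneg n) ▸ Icc_subset_Ici_self
  have hbound (n : ℕ) := IsWeakSubsolution.ae_le_gronwall (hn_nonneg n)
    (isWeakSubsolution_of_forall_hasCompactSupport (hn_nonneg n) hineq)
    (intervalIntegrable_of_locallyIntegrableOn hE (hIcc n))
    (intervalIntegrable_of_locallyIntegrableOn ha (hIcc n))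
    (intervalIntegrable_of_locallyIntegrableOn haE (hIcc n))
    (intervalIntegrable_of_locallyIntegrableOn hb (hIcc n))
  rw [ae_restrict_iff' measurableSet_Ioi]
  filter_upwards [ae_all_iff.2 hbound] with τ hτ hτ_pos
  obtain ⟨n, hn⟩ := exists_nat_gt τ
  exact hτ n ⟨hτ_pos, hn⟩
end
end
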